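/- arXiv:2408.03530 — 7 statements merged into one kernel-verified Lean document; each statement's English description precedes it below -/
import Mathlib

section
/- Assume RA and ER. Then for every Borel set A ⊆ ℝ: P(Y∈A, D=1 | Z=0) − P(Y∈A, D=1 | Z=1) = P(Y₁∈A, T=df) − P(Y₁∈A, T=c), and P(Y∈A, D=0 | Z=1) − P(Y∈A, D=0 | Z=0) = P(Y₀∈A, T=df) − P(Y₀∈A, T=c). In particular (taking A = ℝ): P(D=1 | Z=0) − P(D=1 | Z=1) = p_df − p_c. -/
open MeasureTheory ProbabilityTheory

/-- Conditional probability `P(s | t)` as a real number. -/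
noncomputable def pr {Ω : Type*} [MeasurableSpace Ω] (P : Measure Ω) (t s : Set Ω) : ℝ :=
  ((P[|t]) s).toReal

/-- Conditional expectation `E[f | t]` as a real number. -/
noncomputable def ce {Ω : Type*} [MeasurableSpace Ω] (P : Measure Ω) (t : Set Ω) (f : Ω → ℝ) : ℝ :=
  ∫ ω, f ω ∂(P[|t])

/-- Always-takers. -/
def typeA {Ω : Type*} (D0 D1 : Ω → ℝ) : Set Ω := {ω | D0 ω = 1 ∧ D1 ω = 1}
/-- Never-takers. -/
def typeN {Ω : Type*} (D0 D1 : Ω → ℝ) : Set Ω := {ω | D0 ω = 0 ∧ D1 ω = 0}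
/-- Compliers. -/
def typeC {Ω : Type*} (D0 D1 : Ω → ℝ) : Set Ω := {ω | D0 ω = 0 ∧ D1 ω = 1}
/-- Defiers. -/
def typeDF {Ω : Type*} (D0 D1 : Ω → ℝ) : Set Ω := {ω | D0 ω = 1 ∧ D1 ω = 0}

/-!
Independence of `Z` turns `P(Y ∈ A, D = d | Z = z)` into the unconditional `P(Y_{dz} ∈ A, D_z = d)`.
Under exclusion the outcome event is the same for both values of the instrument, so in a difference
of two such probabilities the units with `D₀ = D₁ = d` cancel. For `d = 1` the units left over are
the defiers and the compliers; for `d = 0` they are the same two groups with the values of the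
instrument exchanged.
-/

theorem measure_ne_zero_of_union_eq_univ {Ω : Type*} [MeasurableSpace Ω] {P : Measure Ω}
    [IsProbabilityMeasure P] {s t : Set Ω} (hst : s ∪ t = Set.univ) (ht : P t < 1) : P s ≠ 0 := by
  intro hs
  have union_eq : P (s ∪ t) = P t := measure_congr
    (union_ae_eq_right_of_ae_eq_empty (ae_eq_empty.mpr hs))
  rw [← union_eq, hst, measure_univ] at ht
  exact ht.false

section FiniteMeasure

variable {Ω : Type*} [MeasurableSpace Ω] {P : Measure Ω} [IsFiniteMeasure P]

theorem measureReal_inter_sub_measureReal_inter (s : Set Ω) {t u : Set Ω}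
    (ht : MeasurableSet t) (hu : MeasurableSet u) :
    P.real (s ∩ t) - P.real (s ∩ u) = P.real (s ∩ (t \ u)) - P.real (s ∩ (u \ t)) := by
  have split_t : P.real (s ∩ (t ∩ u)) + P.real (s ∩ (t \ u)) = P.real (s ∩ t) := by
    simpa only [Set.inter_assoc, Set.inter_sdiff_assoc] using
      measureReal_inter_add_sdiff (μ := P) (s := s ∩ t) hu
  have split_u : P.real (s ∩ (t ∩ u)) + P.real (s ∩ (u \ t)) = P.real (s ∩ u) := by
    simpa only [Set.inter_assoc, Set.inter_sdiff_assoc, Set.inter_comm u t] using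
      measureReal_inter_add_sdiff (μ := P) (s := s ∩ u) ht
  linarith

theorem pr_eq_measureReal_preimage_of_indepFun {E ζ : Type*} [MeasurableSpace E]
    [MeasurableSpace ζ] [MeasurableSingletonClass ζ] {X : Ω → E} {Z : Ω → ζ}
    (hXZ : IndepFun X Z P) (hZ : Measurable Z) {z : ζ} (hz : P {ω | Z ω = z} ≠ 0)
    {S : Set E} (hS : MeasurableSet S) {s : Set Ω}
    (hs : ∀ ω, Z ω = z → (ω ∈ s ↔ X ω ∈ S)) :
    pr P {ω | Z ω = z} s = P.real (X ⁻¹' S) := by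
  have hZz : MeasurableSet {ω | Z ω = z} := hZ (measurableSet_singleton z)
  have event_eq : {ω | Z ω = z} ∩ s = {ω | Z ω = z} ∩ X ⁻¹' S := Set.ext fun ω =>
    and_congr_right (hs ω)
  have product : P ({ω | Z ω = z} ∩ X ⁻¹' S) = P {ω | Z ω = z} * P (X ⁻¹' S) :=
    hXZ.symm.measure_inter_preimage_eq_mul {z} S (measurableSet_singleton z) hS
  rw [pr, cond_apply hZz, event_eq, product,
    ENNReal.inv_mul_cancel_left hz (measure_ne_top P _), measureReal_def]

end FiniteMeasure

/-- The arm `{Z = z}` of an experiment with instrument `Z`, observed outcome `Y` and observed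
treatment `D`. `Dz` is the potential treatment under `z` and `Yz d` the potential outcome under
treatment `d` and instrument value `z`; on the arm they determine what is observed. Random
assignment is imposed pairwise: for each `d`, the pair `(Yz d, Dz)` is independent of `Z`. -/
structure InstrumentArm {Ω E T ζ : Type*} [MeasurableSpace Ω] [MeasurableSpace E]
    [MeasurableSpace T] [MeasurableSpace ζ] (P : Measure Ω) (Z : Ω → ζ) (z : ζ)
    (Yz : T → Ω → E) (Dz : Ω → T) (Y : Ω → E) (D : Ω → T) : Prop where
  measure_ne_zero : P {ω | Z ω = z} ≠ 0
  treatment_eq : ∀ ω, Z ω = z → D ω = Dz ω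
  outcome_eq : ∀ ω, Z ω = z → Y ω = Yz (D ω) ω
  indepFun : ∀ d, IndepFun (fun ω => (Yz d ω, Dz ω)) Z P

section InstrumentArm

variable {Ω E T ζ : Type*} [MeasurableSpace Ω] [MeasurableSpace E]
  [MeasurableSpace T] [MeasurableSingletonClass T] [MeasurableSpace ζ] [MeasurableSingletonClass ζ]
  {P : Measure Ω} [IsFiniteMeasure P] {Z : Ω → ζ} {Y : Ω → E} {D : Ω → T}

theorem InstrumentArm.pr_outcome_mem_and_treatment_eq {z : ζ} {Yz : T → Ω → E} {Dz : Ω → T}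
    (arm : InstrumentArm P Z z Yz Dz Y D) (hZ : Measurable Z) (d : T)
    {A : Set E} (hA : MeasurableSet A) :
    pr P {ω | Z ω = z} {ω | Y ω ∈ A ∧ D ω = d}
      = P.real ({ω | Yz d ω ∈ A} ∩ {ω | Dz ω = d}) := by
  refine pr_eq_measureReal_preimage_of_indepFun (arm.indepFun d) hZ arm.measure_ne_zero
    (hA.prod (measurableSet_singleton d)) fun ω hω => ?_
  have hD := arm.treatment_eq ω hω
  have hY := arm.outcome_eq ω hω
  grind

theorem difference_decompositions_general {z₀ z₁ : ζ} {Y₀ Y₁ : T → Ω → E} {D₀ D₁ : Ω → T}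
    (arm₀ : InstrumentArm P Z z₀ Y₀ D₀ Y D) (arm₁ : InstrumentArm P Z z₁ Y₁ D₁ Y D)
    (hZ : Measurable Z) (hD₀ : Measurable D₀) (hD₁ : Measurable D₁)
    {d : T} (exclusion : ∀ᵐ ω ∂P, Y₀ d ω = Y₁ d ω) {A : Set E} (hA : MeasurableSet A) :
    pr P {ω | Z ω = z₀} {ω | Y ω ∈ A ∧ D ω = d} - pr P {ω | Z ω = z₁} {ω | Y ω ∈ A ∧ D ω = d}
      = P.real ({ω | Y₁ d ω ∈ A} ∩ ({ω | D₀ ω = d} \ {ω | D₁ ω = d}))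
        - P.real ({ω | Y₁ d ω ∈ A} ∩ ({ω | D₁ ω = d} \ {ω | D₀ ω = d})) := by
  have same_outcome : P.real ({ω | Y₀ d ω ∈ A} ∩ {ω | D₀ ω = d})
      = P.real ({ω | Y₁ d ω ∈ A} ∩ {ω | D₀ ω = d}) :=
    measureReal_congr ((Filter.EventuallyEq.preimage exclusion A).inter .rfl)
  rw [arm₀.pr_outcome_mem_and_treatment_eq hZ d hA, arm₁.pr_outcome_mem_and_treatment_eq hZ d hA,
    same_outcome]
  exact measureReal_inter_sub_measureReal_inter _
    (hD₀ (measurableSet_singleton d)) (hD₁ (measurableSet_singleton d))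

end InstrumentArm

section Types

variable {Ω : Type*} {D0 D1 : Ω → ℝ}

theorem setOf_eq_one_sdiff_eq_typeDF (hD1 : ∀ ω, D1 ω = 0 ∨ D1 ω = 1) :
    {ω | D0 ω = 1} \ {ω | D1 ω = 1} = typeDF D0 D1 := by
  ext ω
  grind [typeDF]

theorem setOf_eq_one_sdiff_eq_typeC (hD0 : ∀ ω, D0 ω = 0 ∨ D0 ω = 1) :
    {ω | D1 ω = 1} \ {ω | D0 ω = 1} = typeC D0 D1 := by
  ext ω
  grind [typeC]

theorem setOf_eq_zero_sdiff_eq_typeDF (hD0 : ∀ ω, D0 ω = 0 ∨ D0 ω = 1) :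
    {ω | D1 ω = 0} \ {ω | D0 ω = 0} = typeDF D0 D1 := by
  ext ω
  grind [typeDF]

theorem setOf_eq_zero_sdiff_eq_typeC (hD1 : ∀ ω, D1 ω = 0 ∨ D1 ω = 1) :
    {ω | D0 ω = 0} \ {ω | D1 ω = 0} = typeC D0 D1 := by
  ext ω
  grind [typeC]

end Types

theorem difference_decompositions
    {Ω : Type*} [MeasurableSpace Ω] (P : Measure Ω) [IsProbabilityMeasure P]
    (Y11 Y10 Y01 Y00 D0 D1 Z D Y : Ω → ℝ)
    (hY11m : Measurable Y11) (hY10m : Measurable Y10)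
    (hY01m : Measurable Y01) (hY00m : Measurable Y00)
    (hD0m : Measurable D0) (hD1m : Measurable D1) (hZm : Measurable Z)
    (hD0b : ∀ ω, D0 ω = 0 ∨ D0 ω = 1) (hD1b : ∀ ω, D1 ω = 0 ∨ D1 ω = 1)
    (hZb : ∀ ω, Z ω = 0 ∨ Z ω = 1)
    (hZpos : 0 < P {ω | Z ω = 1}) (hZlt : P {ω | Z ω = 1} < 1)
    (hDdef : ∀ ω, D ω = D1 ω * Z ω + D0 ω * (1 - Z ω))
    (hYdef : ∀ ω, Y ω = (Y11 ω * Z ω + Y10 ω * (1 - Z ω)) * D ω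
        + (Y01 ω * Z ω + Y00 ω * (1 - Z ω)) * (1 - D ω))
    (RA : IndepFun (fun ω => (Y11 ω, Y10 ω, Y01 ω, Y00 ω, D0 ω, D1 ω)) Z P)
    (ER1 : ∀ᵐ ω ∂P, Y11 ω = Y10 ω) (ER0 : ∀ᵐ ω ∂P, Y01 ω = Y00 ω)
    (A : Set ℝ) (hA : MeasurableSet A) :
    pr P {ω | Z ω = 0} {ω | Y ω ∈ A ∧ D ω = 1}
        - pr P {ω | Z ω = 1} {ω | Y ω ∈ A ∧ D ω = 1}
      = (P ({ω | Y11 ω ∈ A} ∩ typeDF D0 D1)).toReal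
        - (P ({ω | Y11 ω ∈ A} ∩ typeC D0 D1)).toReal
  ∧ pr P {ω | Z ω = 1} {ω | Y ω ∈ A ∧ D ω = 0}
        - pr P {ω | Z ω = 0} {ω | Y ω ∈ A ∧ D ω = 0}
      = (P ({ω | Y00 ω ∈ A} ∩ typeDF D0 D1)).toReal
        - (P ({ω | Y00 ω ∈ A} ∩ typeC D0 D1)).toReal
  ∧ pr P {ω | Z ω = 0} {ω | D ω = 1} - pr P {ω | Z ω = 1} {ω | D ω = 1}
      = (P (typeDF D0 D1)).toReal - (P (typeC D0 D1)).toReal := by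
  have hZ0 : P {ω | Z ω = 0} ≠ 0 :=
    measure_ne_zero_of_union_eq_univ (Set.eq_univ_of_forall hZb) hZlt
  have arm₀ : InstrumentArm P Z 0 (fun d ω => Y10 ω * d + Y00 ω * (1 - d)) D0 Y D :=
    ⟨hZ0, fun ω hω => by simp [hDdef, hω], fun ω hω => by simp [hYdef, hω], fun d =>
      RA.comp (φ := fun x => (x.2.1 * d + x.2.2.2.1 * (1 - d), x.2.2.2.2.1))
        (by fun_prop) measurable_id⟩
  have arm₁ : InstrumentArm P Z 1 (fun d ω => Y11 ω * d + Y01 ω * (1 - d)) D1 Y D :=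
    ⟨hZpos.ne', fun ω hω => by simp [hDdef, hω], fun ω hω => by simp [hYdef, hω], fun d =>
      RA.comp (φ := fun x => (x.1 * d + x.2.2.1 * (1 - d), x.2.2.2.2.2))
        (by fun_prop) measurable_id⟩
  have treated {B : Set ℝ} (hB : MeasurableSet B) :=
    difference_decompositions_general arm₀ arm₁ hZm hD0m hD1m (d := 1)
      (by simpa [eq_comm] using ER1) hB
  have untreated := difference_decompositions_general arm₁ arm₀ hZm hD1m hD0m (d := 0)
    (by simpa using ER0) hA
  simp only [setOf_eq_one_sdiff_eq_typeDF hD1b, setOf_eq_one_sdiff_eq_typeC hD0b] at treated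
  simp only [setOf_eq_zero_sdiff_eq_typeDF hD0b, setOf_eq_zero_sdiff_eq_typeC hD1b] at untreated
  exact ⟨by simpa [measureReal_def] using treated hA,
    by simpa [measureReal_def] using untreated,
    by simpa [measureReal_def] using treated .univ⟩
end

section
/- Assume RA and MON (D₁ ≥ D₀ almost surely). Then the four type probabilities are point identified: p_df = 0, p_c = P(D=1 | Z=1) − P(D=1 | Z=0), p_a = P(D=1 | Z=0), and p_n = P(D=0 | Z=1). -/
open MeasureTheory ProbabilityTheory

/-!
Under random assignment, each arm of the instrument reveals the marginal law of one potential
treatment, and each value of a potential treatment is taken by exactly two types: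
`P(D=1 | Z=1) = p_a + p_c`, `P(D=1 | Z=0) = p_a + p_df` and `P(D=0 | Z=1) = p_n + p_df`.
Monotonicity makes `p_df` vanish, and the system becomes triangular.
-/

section ConditionalProbability

variable {Ω α β : Type*} [MeasurableSpace Ω] [MeasurableSpace α] [MeasurableSpace β]
  {P : Measure Ω}

theorem pr_congr {t s s' : Set Ω} (ht : MeasurableSet t) (h : t ∩ s = t ∩ s') :
    pr P t s = pr P t s' := by
  rw [pr, pr, ← cond_inter_self ht, h, cond_inter_self ht]

theorem pr_preimage_eq_measureReal_of_indepFun [IsFiniteMeasure P] {X : Ω → α} {Z : Ω → β}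
    (hXZ : IndepFun X Z P) (hZ : Measurable Z) {S : Set α} (hS : MeasurableSet S)
    {T : Set β} (hT : MeasurableSet T) (hT₀ : P (Z ⁻¹' T) ≠ 0) :
    pr P (Z ⁻¹' T) (X ⁻¹' S) = P.real (X ⁻¹' S) := by
  have cond_eq : P[X ⁻¹' S | Z ⁻¹' T] = P (X ⁻¹' S) := by
    rw [cond_apply (hZ hT), hXZ.symm.measure_inter_preimage_eq_mul T S hT hS,
      ENNReal.inv_mul_cancel_left hT₀ (measure_ne_top _ _)]
  rw [pr, cond_eq, measureReal_def]

theorem pr_fiber_eq_measureReal_of_indepFun [IsFiniteMeasure P] [MeasurableSingletonClass α]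
    [MeasurableSingletonClass β] {X Y : Ω → α} {Z : Ω → β} (hXZ : IndepFun X Z P)
    (hZ : Measurable Z) {z : β} (hz : P {ω | Z ω = z} ≠ 0)
    (hYX : ∀ ω, Z ω = z → Y ω = X ω) (x : α) :
    pr P {ω | Z ω = z} {ω | Y ω = x} = P.real {ω | X ω = x} := by
  have same_on_fiber : {ω | Z ω = z} ∩ {ω | Y ω = x} = {ω | Z ω = z} ∩ {ω | X ω = x} :=
    Set.ext fun ω => and_congr_right fun hω => Eq.congr_left (hYX ω hω)
  calc
    pr P {ω | Z ω = z} {ω | Y ω = x} = pr P {ω | Z ω = z} {ω | X ω = x} :=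
      pr_congr (hZ (measurableSet_singleton z)) same_on_fiber
    _ = P.real {ω | X ω = x} :=
      pr_preimage_eq_measureReal_of_indepFun (S := {x}) (T := {z}) hXZ hZ
        (measurableSet_singleton x) (measurableSet_singleton z) hz

end ConditionalProbability

section Binary

variable {Ω β : Type*} [Zero β] [One β] [NeZero (1 : β)] {X : Ω → β}

theorem compl_setOf_eq_one_of_binary (hX : ∀ ω, X ω = 0 ∨ X ω = 1) :
    {ω | X ω = 1}ᶜ = {ω | X ω = 0} := by
  ext ω
  rcases hX ω with h | h <;> simp [h]

variable [MeasurableSpace Ω] [MeasurableSpace β] [MeasurableSingletonClass β] {P : Measure Ω}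

theorem measure_setOf_eq_zero_ne_zero_of_binary [IsProbabilityMeasure P] (hXm : Measurable X)
    (hX : ∀ ω, X ω = 0 ∨ X ω = 1) (hlt : P {ω | X ω = 1} < 1) : P {ω | X ω = 0} ≠ 0 := by
  have hm : MeasurableSet {ω | X ω = 1} := hXm (measurableSet_singleton 1)
  rw [← compl_setOf_eq_one_of_binary hX, Ne, prob_compl_eq_zero_iff hm]
  exact hlt.ne

theorem measureReal_eq_add_of_binary [IsFiniteMeasure P] (hXm : Measurable X)
    (hX : ∀ ω, X ω = 0 ∨ X ω = 1) (s : Set Ω) :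
    P.real s = P.real (s ∩ {ω | X ω = 1}) + P.real (s ∩ {ω | X ω = 0}) := by
  have hm : MeasurableSet {ω | X ω = 1} := hXm (measurableSet_singleton 1)
  rw [← compl_setOf_eq_one_of_binary hX, ← Set.sdiff_eq, measureReal_inter_add_sdiff hm]

end Binary

section ComplianceTypes

variable {Ω : Type*} [MeasurableSpace Ω] {P : Measure Ω} {D0 D1 : Ω → ℝ}

theorem measureReal_D0_eq_one [IsFiniteMeasure P] (hD1m : Measurable D1)
    (hD1 : ∀ ω, D1 ω = 0 ∨ D1 ω = 1) :
    P.real {ω | D0 ω = 1} = P.real (typeA D0 D1) + P.real (typeDF D0 D1) :=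
  measureReal_eq_add_of_binary hD1m hD1 _

theorem measureReal_D1_eq_one [IsFiniteMeasure P] (hD0m : Measurable D0)
    (hD0 : ∀ ω, D0 ω = 0 ∨ D0 ω = 1) :
    P.real {ω | D1 ω = 1} = P.real (typeA D0 D1) + P.real (typeC D0 D1) := by
  rw [measureReal_eq_add_of_binary hD0m hD0, Set.inter_comm, Set.inter_comm _ {ω | D0 ω = 0}]
  rfl

theorem measureReal_D1_eq_zero [IsFiniteMeasure P] (hD0m : Measurable D0)
    (hD0 : ∀ ω, D0 ω = 0 ∨ D0 ω = 1) :
    P.real {ω | D1 ω = 0} = P.real (typeDF D0 D1) + P.real (typeN D0 D1) := by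
  rw [measureReal_eq_add_of_binary hD0m hD0, Set.inter_comm, Set.inter_comm _ {ω | D0 ω = 0}]
  rfl

theorem measureReal_typeDF_eq_zero (hle : D0 ≤ᵐ[P] D1) : P.real (typeDF D0 D1) = 0 := by
  have ae_notMem : ∀ᵐ ω ∂P, ω ∉ typeDF D0 D1 := by
    filter_upwards [hle] with ω hω ⟨h0, h1⟩
    linarith
  rw [measureReal_def, measure_eq_zero_iff_ae_notMem.2 ae_notMem, ENNReal.toReal_zero]

end ComplianceTypes

theorem type_probabilities_identified
    {Ω : Type*} [MeasurableSpace Ω] (P : Measure Ω) [IsProbabilityMeasure P]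
    (D0 D1 Z D : Ω → ℝ)
    (hD0m : Measurable D0) (hD1m : Measurable D1) (hZm : Measurable Z)
    (hD0b : ∀ ω, D0 ω = 0 ∨ D0 ω = 1) (hD1b : ∀ ω, D1 ω = 0 ∨ D1 ω = 1)
    (hZb : ∀ ω, Z ω = 0 ∨ Z ω = 1)
    (hZpos : 0 < P {ω | Z ω = 1}) (hZlt : P {ω | Z ω = 1} < 1)
    (hDdef : ∀ ω, D ω = D1 ω * Z ω + D0 ω * (1 - Z ω))
    (RA : IndepFun (fun ω => (D0 ω, D1 ω)) Z P)
    (MON : ∀ᵐ ω ∂P, D0 ω ≤ D1 ω) :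
    (P (typeDF D0 D1)).toReal = 0
  ∧ (P (typeC D0 D1)).toReal
      = pr P {ω | Z ω = 1} {ω | D ω = 1} - pr P {ω | Z ω = 0} {ω | D ω = 1}
  ∧ (P (typeA D0 D1)).toReal = pr P {ω | Z ω = 0} {ω | D ω = 1}
  ∧ (P (typeN D0 D1)).toReal = pr P {ω | Z ω = 1} {ω | D ω = 0} := by
  have hZ0 := measure_setOf_eq_zero_ne_zero_of_binary hZm hZb hZlt
  have indep0 : IndepFun D0 Z P := RA.comp measurable_fst measurable_id
  have indep1 : IndepFun D1 Z P := RA.comp measurable_snd measurable_id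
  have D_eq_D0 (ω : Ω) (hω : Z ω = 0) : D ω = D0 ω := by simp [hDdef, hω]
  have D_eq_D1 (ω : Ω) (hω : Z ω = 1) : D ω = D1 ω := by simp [hDdef, hω]
  have no_defiers : P.real (typeDF D0 D1) = 0 := measureReal_typeDF_eq_zero MON
  have treated_assigned :
      pr P {ω | Z ω = 1} {ω | D ω = 1} = P.real (typeA D0 D1) + P.real (typeC D0 D1) :=
    (pr_fiber_eq_measureReal_of_indepFun indep1 hZm hZpos.ne' D_eq_D1 1).trans
      (measureReal_D1_eq_one hD0m hD0b)
  have treated_unassigned :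
      pr P {ω | Z ω = 0} {ω | D ω = 1} = P.real (typeA D0 D1) + P.real (typeDF D0 D1) :=
    (pr_fiber_eq_measureReal_of_indepFun indep0 hZm hZ0 D_eq_D0 1).trans
      (measureReal_D0_eq_one hD1m hD1b)
  have untreated_assigned :
      pr P {ω | Z ω = 1} {ω | D ω = 0} = P.real (typeDF D0 D1) + P.real (typeN D0 D1) :=
    (pr_fiber_eq_measureReal_of_indepFun indep1 hZm hZpos.ne' D_eq_D1 0).trans
      (measureReal_D1_eq_zero hD0m hD0b)
  simp only [← measureReal_def]
  refine ⟨no_defiers, ?_, ?_, ?_⟩ <;> linarith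
end

section
/- Assume RA, ER and MON (D₁ ≥ D₀ almost surely). Then the testable implications of the LATE assumptions hold: for every Borel set A ⊆ ℝ, P(Y∈A, D=1 | Z=0) ≤ P(Y∈A, D=1 | Z=1) and P(Y∈A, D=0 | Z=1) ≤ P(Y∈A, D=0 | Z=0). -/
open MeasureTheory ProbabilityTheory

/-!
Conditioning on `Z = z` replaces the observed pair `(Y, D)` by the pair realized in arm `z`, and
randomization then removes the conditioning. Both inequalities thus compare unconditional
probabilities, and they reduce to inclusions of events: under monotonicity a unit treated in arm
`0` is an always-taker and a unit untreated in arm `1` is a never-taker, and for these units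
exclusion makes the outcome the same in both arms.
-/

section Conditioning

variable {Ω β ι : Type*} [MeasurableSpace Ω] [MeasurableSpace β] [MeasurableSpace ι]
  [MeasurableSingletonClass ι] {P : Measure Ω}

theorem pr_eq_measureReal_of_indepFun [IsFiniteMeasure P] {X W : Ω → β} {Z : Ω → ι} {z : ι}
    (hZ : Measurable Z) (hz : P {ω | Z ω = z} ≠ 0) (hXW : ∀ ω, Z ω = z → X ω = W ω)
    (hWZ : IndepFun W Z P) {B : Set β} (hB : MeasurableSet B) :
    pr P {ω | Z ω = z} {ω | X ω ∈ B} = P.real {ω | W ω ∈ B} := by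
  have hzm : MeasurableSet {ω | Z ω = z} := hZ (measurableSet_singleton z)
  have hinter : {ω | Z ω = z} ∩ {ω | X ω ∈ B} = {ω | Z ω = z} ∩ {ω | W ω ∈ B} :=
    Set.ext fun ω => and_congr_right fun hω : Z ω = z => by
      rw [Set.mem_ofPred_eq, Set.mem_ofPred_eq, hXW ω hω]
  have hmul : P ({ω | Z ω = z} ∩ {ω | W ω ∈ B}) = P {ω | Z ω = z} * P {ω | W ω ∈ B} :=
    hWZ.symm.measure_inter_preimage_eq_mul {z} B (measurableSet_singleton z) hB
  rw [pr, cond_apply hzm, hinter, hmul, ENNReal.inv_mul_cancel_left hz (measure_ne_top P _),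
    measureReal_def]

theorem pr_le_pr_of_indepFun [IsFiniteMeasure P] {X Xa Xb : Ω → β} {Z : Ω → ι} {a b : ι}
    (hZ : Measurable Z) (ha : P {ω | Z ω = a} ≠ 0) (hb : P {ω | Z ω = b} ≠ 0)
    (hXa : ∀ ω, Z ω = a → X ω = Xa ω) (hXb : ∀ ω, Z ω = b → X ω = Xb ω)
    (hXaZ : IndepFun Xa Z P) (hXbZ : IndepFun Xb Z P)
    {B : Set β} (hB : MeasurableSet B) (hab : ∀ᵐ ω ∂P, Xa ω ∈ B → Xb ω ∈ B) :
    pr P {ω | Z ω = a} {ω | X ω ∈ B} ≤ pr P {ω | Z ω = b} {ω | X ω ∈ B} :=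
  calc pr P {ω | Z ω = a} {ω | X ω ∈ B}
      = P.real {ω | Xa ω ∈ B} := pr_eq_measureReal_of_indepFun hZ ha hXa hXaZ hB
    _ ≤ P.real {ω | Xb ω ∈ B} := ENNReal.toReal_mono (measure_ne_top P _) (measure_mono_ae hab)
    _ = pr P {ω | Z ω = b} {ω | X ω ∈ B} :=
        (pr_eq_measureReal_of_indepFun hZ hb hXb hXbZ hB).symm

theorem measure_fiber_ne_zero_of_lt_one [IsProbabilityMeasure P] {Z : Ω → ι} {a b : ι}
    (hZ : Measurable Z) (hab : ∀ ω, Z ω = a ∨ Z ω = b) (hb : P {ω | Z ω = b} < 1) :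
    P {ω | Z ω = a} ≠ 0 := by
  intro ha
  have hcompl : {ω | Z ω = b}ᶜ ⊆ {ω | Z ω = a} := fun ω hω => (hab ω).resolve_right hω
  exact hb.ne <| (prob_compl_eq_zero_iff (hZ (measurableSet_singleton b))).1
    (measure_mono_null hcompl ha)

end Conditioning

section RealizedPair

variable {α 𝓨 : Type*} {y₁ y₀ : 𝓨} {d : ℝ} {A : Set 𝓨}

/-- The outcome-treatment pair realized in one arm of the instrument, for a unit whose treatment
in that arm is `d` and whose outcomes there with and without treatment are `y₁` and `y₀`. Any
`d ≠ 1` counts as untreated, so that no algebraic structure on the outcomes is needed. -/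
noncomputable def realizedPair (y₁ y₀ : 𝓨) (d : ℝ) : 𝓨 × ℝ :=
  (if d = 1 then y₁ else y₀, d)

theorem realizedPair_mem_prod_one : realizedPair y₁ y₀ d ∈ A ×ˢ {1} ↔ y₁ ∈ A ∧ d = 1 := by
  by_cases h : d = 1 <;> simp [realizedPair, h]

theorem realizedPair_mem_prod_zero : realizedPair y₁ y₀ d ∈ A ×ˢ {0} ↔ y₀ ∈ A ∧ d = 0 := by
  by_cases h : d = 0 <;> simp [realizedPair, h]

theorem realizedPair_eq_of_binary {y₁ y₀ : ℝ} (hd : d = 0 ∨ d = 1) :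
    realizedPair y₁ y₀ d = (y₁ * d + y₀ * (1 - d), d) := by
  rcases hd with rfl | rfl <;> simp [realizedPair]

theorem measurable_realizedPair [MeasurableSpace α] [MeasurableSpace 𝓨] {f g : α → 𝓨}
    {h : α → ℝ} (hf : Measurable f) (hg : Measurable g) (hh : Measurable h) :
    Measurable fun x => realizedPair (f x) (g x) (h x) :=
  (Measurable.ite (hh (measurableSet_singleton 1)) hf hg).prodMk hh

end RealizedPair

section Types

variable {Ω : Type*} {D0 D1 : Ω → ℝ} {ω : Ω}

theorem mem_typeA_of_le (hD1 : D1 ω = 0 ∨ D1 ω = 1) (hle : D0 ω ≤ D1 ω) (h : D0 ω = 1) :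
    ω ∈ typeA D0 D1 :=
  ⟨h, hD1.resolve_left fun h1 => by linarith⟩

theorem mem_typeN_of_le (hD0 : D0 ω = 0 ∨ D0 ω = 1) (hle : D0 ω ≤ D1 ω) (h : D1 ω = 0) :
    ω ∈ typeN D0 D1 :=
  ⟨hD0.resolve_right fun h0 => by linarith, h⟩

end Types

theorem late_testable_implications_general
    {Ω 𝓨 ι : Type*} [MeasurableSpace Ω] [MeasurableSpace 𝓨] [MeasurableSpace ι]
    [MeasurableSingletonClass ι] (P : Measure Ω) [IsFiniteMeasure P]
    {Y11 Y10 Y01 Y00 Y : Ω → 𝓨} {D0 D1 D : Ω → ℝ} {Z : Ω → ι} {z₀ z₁ : ι}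
    (hZm : Measurable Z) (hz₀ : P {ω | Z ω = z₀} ≠ 0) (hz₁ : P {ω | Z ω = z₁} ≠ 0)
    (hD0b : ∀ ω, D0 ω = 0 ∨ D0 ω = 1) (hD1b : ∀ ω, D1 ω = 0 ∨ D1 ω = 1)
    (hobs₀ : ∀ ω, Z ω = z₀ → (Y ω, D ω) = realizedPair (Y10 ω) (Y00 ω) (D0 ω))
    (hobs₁ : ∀ ω, Z ω = z₁ → (Y ω, D ω) = realizedPair (Y11 ω) (Y01 ω) (D1 ω))
    (RA0 : IndepFun (fun ω => realizedPair (Y10 ω) (Y00 ω) (D0 ω)) Z P)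
    (RA1 : IndepFun (fun ω => realizedPair (Y11 ω) (Y01 ω) (D1 ω)) Z P)
    (ER1 : ∀ᵐ ω ∂P, ω ∈ typeA D0 D1 → Y11 ω = Y10 ω)
    (ER0 : ∀ᵐ ω ∂P, ω ∈ typeN D0 D1 → Y01 ω = Y00 ω)
    (MON : ∀ᵐ ω ∂P, D0 ω ≤ D1 ω)
    {A : Set 𝓨} (hA : MeasurableSet A) :
    pr P {ω | Z ω = z₀} {ω | Y ω ∈ A ∧ D ω = 1}
      ≤ pr P {ω | Z ω = z₁} {ω | Y ω ∈ A ∧ D ω = 1}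
  ∧ pr P {ω | Z ω = z₁} {ω | Y ω ∈ A ∧ D ω = 0}
      ≤ pr P {ω | Z ω = z₀} {ω | Y ω ∈ A ∧ D ω = 0} := by
  constructor
  · refine pr_le_pr_of_indepFun hZm hz₀ hz₁ hobs₀ hobs₁ RA0 RA1
      (hA.prod (measurableSet_singleton 1)) ?_
    filter_upwards [ER1, MON] with ω hexcl hle
    rw [realizedPair_mem_prod_one, realizedPair_mem_prod_one]
    rintro ⟨hY, hD0⟩
    have halways : ω ∈ typeA D0 D1 := mem_typeA_of_le (hD1b ω) hle hD0
    exact ⟨(hexcl halways).symm ▸ hY, halways.2⟩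
  · refine pr_le_pr_of_indepFun hZm hz₁ hz₀ hobs₁ hobs₀ RA1 RA0
      (hA.prod (measurableSet_singleton 0)) ?_
    filter_upwards [ER0, MON] with ω hexcl hle
    rw [realizedPair_mem_prod_zero, realizedPair_mem_prod_zero]
    rintro ⟨hY, hD1⟩
    have hnever : ω ∈ typeN D0 D1 := mem_typeN_of_le (hD0b ω) hle hD1
    exact ⟨hexcl hnever ▸ hY, hnever.1⟩

theorem late_testable_implications
    {Ω : Type*} [MeasurableSpace Ω] (P : Measure Ω) [IsProbabilityMeasure P]
    (Y11 Y10 Y01 Y00 D0 D1 Z D Y : Ω → ℝ)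
    (hY11m : Measurable Y11) (hY10m : Measurable Y10)
    (hY01m : Measurable Y01) (hY00m : Measurable Y00)
    (hD0m : Measurable D0) (hD1m : Measurable D1) (hZm : Measurable Z)
    (hD0b : ∀ ω, D0 ω = 0 ∨ D0 ω = 1) (hD1b : ∀ ω, D1 ω = 0 ∨ D1 ω = 1)
    (hZb : ∀ ω, Z ω = 0 ∨ Z ω = 1)
    (hZpos : 0 < P {ω | Z ω = 1}) (hZlt : P {ω | Z ω = 1} < 1)
    (hDdef : ∀ ω, D ω = D1 ω * Z ω + D0 ω * (1 - Z ω))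
    (hYdef : ∀ ω, Y ω = (Y11 ω * Z ω + Y10 ω * (1 - Z ω)) * D ω
        + (Y01 ω * Z ω + Y00 ω * (1 - Z ω)) * (1 - D ω))
    (RA : IndepFun (fun ω => (Y11 ω, Y10 ω, Y01 ω, Y00 ω, D0 ω, D1 ω)) Z P)
    (ER1 : ∀ᵐ ω ∂P, Y11 ω = Y10 ω) (ER0 : ∀ᵐ ω ∂P, Y01 ω = Y00 ω)
    (MON : ∀ᵐ ω ∂P, D0 ω ≤ D1 ω)
    (A : Set ℝ) (hA : MeasurableSet A) :
    pr P {ω | Z ω = 0} {ω | Y ω ∈ A ∧ D ω = 1}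
      ≤ pr P {ω | Z ω = 1} {ω | Y ω ∈ A ∧ D ω = 1}
  ∧ pr P {ω | Z ω = 1} {ω | Y ω ∈ A ∧ D ω = 0}
      ≤ pr P {ω | Z ω = 0} {ω | Y ω ∈ A ∧ D ω = 0} := by
  have RA0 : IndepFun (fun ω => realizedPair (Y10 ω) (Y00 ω) (D0 ω)) Z P :=
    RA.comp (measurable_realizedPair measurable_snd.fst measurable_snd.snd.snd.fst
      measurable_snd.snd.snd.snd.fst) measurable_id
  have RA1 : IndepFun (fun ω => realizedPair (Y11 ω) (Y01 ω) (D1 ω)) Z P :=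
    RA.comp (measurable_realizedPair measurable_fst measurable_snd.snd.fst
      measurable_snd.snd.snd.snd.snd) measurable_id
  exact late_testable_implications_general P hZm
    (measure_fiber_ne_zero_of_lt_one hZm hZb hZlt) hZpos.ne' hD0b hD1b
    (fun ω hω => by simp [realizedPair_eq_of_binary (hD0b ω), hYdef, hDdef, hω])
    (fun ω hω => by simp [realizedPair_eq_of_binary (hD1b ω), hYdef, hDdef, hω])
    RA0 RA1 (ER1.mono fun _ h _ => h) (ER0.mono fun _ h _ => h) MON hA
end

section
/- Assume RA, ER and MON (D₁ ≥ D₀ almost surely), that Y₁ and Y₀ are integrable, and that P(D=1 | Z=1) > P(D=1 | Z=0). Then p_c > 0 and the local average treatment effect for compliers is identified by the Wald ratio: E[Y₁ − Y₀ | T=c] = (E[Y | Z=1] − E[Y | Z=0]) / (E[D | Z=1] − E[D | Z=0]). -/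
open MeasureTheory ProbabilityTheory

/-!
Random assignment turns the mean of an observed variable in the arm `Z = z` into the unconditional
mean of its potential value in that arm. By exclusion the potential outcomes in the two arms are
`D₁ Y₁ + (1 - D₁) Y₀` and `D₀ Y₁ + (1 - D₀) Y₀`, whose difference is `(D₁ - D₀)(Y₁ - Y₀)`, and by
monotonicity `D₁ - D₀` is the indicator of the compliers. So the numerator of the Wald ratio is
`∫_{T = c} (Y₁ - Y₀) ∂P`; the treatment is itself the outcome with `Y₁ = 1`, `Y₀ = 0`, which makes
the denominator `p_c`.
-/

section Conditioning

variable {Ω E ζ : Type*} [MeasurableSpace Ω] {P : Measure Ω} [MeasurableSpace ζ] {Z : Ω → ζ}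
  {s : Set ζ}

theorem identDistrib_cond_of_indepFun [IsFiniteMeasure P] [MeasurableSpace E] {X : Ω → E}
    (hX : AEMeasurable X P) (hZ : Measurable Z) (hs : MeasurableSet s) (hXZ : IndepFun X Z P)
    (hPs : P (Z ⁻¹' s) ≠ 0) : IdentDistrib X X P[|Z ⁻¹' s] P where
  aemeasurable_fst := hX.mono_ac cond_absolutelyContinuous
  aemeasurable_snd := hX
  map_eq := by
    ext B hB
    rw [Measure.map_apply_of_aemeasurable (hX.mono_ac cond_absolutelyContinuous) hB,
      Measure.map_apply_of_aemeasurable hX hB, cond_apply (hZ hs), Set.inter_comm,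
      hXZ.measure_inter_preimage_eq_mul B s hB hs, mul_comm (P (X ⁻¹' B)), ← mul_assoc,
      ENNReal.inv_mul_cancel hPs (measure_ne_top _ _), one_mul]

theorem integral_cond_eq_integral_of_indepFun [IsFiniteMeasure P] [NormedAddCommGroup E]
    [NormedSpace ℝ E] [MeasurableSpace E] [BorelSpace E] {X Y : Ω → E} (hX : AEMeasurable X P)
    (hZ : Measurable Z) (hs : MeasurableSet s) (hXZ : IndepFun X Z P) (hPs : P (Z ⁻¹' s) ≠ 0)
    (hYX : ∀ ω, Z ω ∈ s → Y ω = X ω) : ∫ ω, Y ω ∂P[|Z ⁻¹' s] = ∫ ω, X ω ∂P :=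
  (integral_congr_ae (ae_cond_of_forall_mem (hZ hs) hYX)).trans
    (identDistrib_cond_of_indepFun hX hZ hs hXZ hPs).integral_eq

theorem integral_cond_eq_inv_smul_setIntegral [NormedAddCommGroup E] [NormedSpace ℝ E]
    (t : Set Ω) (f : Ω → E) : ∫ ω, f ω ∂P[|t] = (P.real t)⁻¹ • ∫ ω in t, f ω ∂P := by
  rw [ProbabilityTheory.cond, integral_smul_measure, ENNReal.toReal_inv, measureReal_def]

theorem pr_eq_ce_of_binary (t : Set Ω) {D : Ω → ℝ} (hD : Measurable D)
    (hDb : ∀ ω, D ω = 0 ∨ D ω = 1) : pr P t {ω | D ω = 1} = ce P t D := by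
  have hD_ind : D = {ω | D ω = 1}.indicator 1 := by
    funext ω
    rcases hDb ω with h | h <;> simp [h]
  calc pr P t {ω | D ω = 1}
      = ∫ ω, {ω | D ω = 1}.indicator 1 ω ∂P[|t] :=
        (integral_indicator_one (hD (measurableSet_singleton 1))).symm
    _ = ce P t D := by rw [← hD_ind, ce]

end Conditioning

section Switching

variable {Ω E : Type*}

/-- The switching equation of the potential-outcome model: the outcome is `y₁` where the binary
indicator `d` is `1`, and `y₀` where it is `0`. Here `d` may be the treatment or the instrument. -/
def switch [AddCommGroup E] [Module ℝ E] (d : Ω → ℝ) (y₁ y₀ : Ω → E) (ω : Ω) : E :=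
  d ω • y₁ ω + (1 - d ω) • y₀ ω

section Algebra

variable [AddCommGroup E] [Module ℝ E] {d : Ω → ℝ} {ω : Ω}

theorem switch_of_eq_one (y₁ y₀ : Ω → E) (h : d ω = 1) : switch d y₁ y₀ ω = y₁ ω := by
  simp [switch, h]

theorem switch_of_eq_zero (y₁ y₀ : Ω → E) (h : d ω = 0) : switch d y₁ y₀ ω = y₀ ω := by
  simp [switch, h]

theorem switch_one_zero (d : Ω → ℝ) : switch d (1 : Ω → ℝ) 0 = d := by
  ext ω
  simp [switch]

theorem switch_sub_switch (d₁ d₀ : Ω → ℝ) (y₁ y₀ : Ω → E) (ω : Ω) :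
    switch d₁ y₁ y₀ ω - switch d₀ y₁ y₀ ω = (d₁ ω - d₀ ω) • (y₁ ω - y₀ ω) := by
  simp only [switch]
  module

theorem switch_binary {d₁ d₀ : Ω → ℝ} (hd : ∀ ω, d ω = 0 ∨ d ω = 1)
    (hd₁ : ∀ ω, d₁ ω = 0 ∨ d₁ ω = 1) (hd₀ : ∀ ω, d₀ ω = 0 ∨ d₀ ω = 1) (ω : Ω) :
    switch d d₁ d₀ ω = 0 ∨ switch d d₁ d₀ ω = 1 := by
  rcases hd ω with h | h
  · simpa only [switch_of_eq_zero _ _ h] using hd₀ ω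
  · simpa only [switch_of_eq_one _ _ h] using hd₁ ω

theorem switch_switch {z : Ω → ℝ} (hz : ∀ ω, z ω = 0 ∨ z ω = 1) (d₁ d₀ : Ω → ℝ)
    (y₁₁ y₁₀ y₀₁ y₀₀ : Ω → E) :
    switch (switch z d₁ d₀) (switch z y₁₁ y₁₀) (switch z y₀₁ y₀₀) =
      switch z (switch d₁ y₁₁ y₀₁) (switch d₀ y₁₀ y₀₀) := by
  ext ω
  rcases hz ω with h | h <;> simp [switch, h]

end Algebra

variable [MeasurableSpace Ω] {P : Measure Ω} {d : Ω → ℝ} {y₁ y₀ : Ω → E}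

theorem indepFun_switch [AddCommGroup E] [Module ℝ E] [MeasurableSpace E] {ζ : Type*}
    [MeasurableSpace ζ] {Z : Ω → ζ} (hd : ∀ ω, d ω = 0 ∨ d ω = 1)
    (h : IndepFun (fun ω => (y₁ ω, y₀ ω, d ω)) Z P) : IndepFun (switch d y₁ y₀) Z P := by
  have hφ : Measurable fun p : E × E × ℝ => if p.2.2 = 1 then p.1 else p.2.1 :=
    Measurable.ite (measurable_snd.snd (measurableSet_singleton 1)) measurable_fst
      measurable_snd.fst
  refine (h.comp hφ measurable_id).congr (.of_eq ?_) .rfl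
  ext ω
  rcases hd ω with h | h <;> simp [switch, h]

theorem integrable_switch [NormedAddCommGroup E] [NormedSpace ℝ E] (hdm : Measurable d)
    (hd : ∀ ω, d ω = 0 ∨ d ω = 1) (hy₁ : Integrable y₁ P) (hy₀ : Integrable y₀ P) :
    Integrable (switch d y₁ y₀) P := by
  have hd_norm (ω : Ω) : ‖d ω‖ ≤ 1 ∧ ‖1 - d ω‖ ≤ 1 := by
    rcases hd ω with h | h <;> simp [h]
  exact (hy₁.bdd_smul 1 hdm.aestronglyMeasurable (.of_forall fun ω => (hd_norm ω).1)).add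
    (hy₀.bdd_smul 1 (hdm.const_sub 1).aestronglyMeasurable (.of_forall fun ω => (hd_norm ω).2))

end Switching

section Compliers

variable {Ω E : Type*} {d₀ d₁ : Ω → ℝ}

theorem sub_smul_eq_indicator_typeC [AddCommGroup E] [Module ℝ E] {ω : Ω}
    (hd₀ : d₀ ω = 0 ∨ d₀ ω = 1) (hd₁ : d₁ ω = 0 ∨ d₁ ω = 1) (hle : d₀ ω ≤ d₁ ω) (f : Ω → E) :
    (d₁ ω - d₀ ω) • f ω = (typeC d₀ d₁).indicator f ω := by
  rcases hd₀ with h₀ | h₀ <;> rcases hd₁ with h₁ | h₁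
  · simp [typeC, h₀, h₁]
  · simp [typeC, h₀, h₁]
  · norm_num [h₀, h₁] at hle
  · simp [typeC, h₀, h₁]

variable [MeasurableSpace Ω] {P : Measure Ω}

theorem measurableSet_typeC (hd₀ : Measurable d₀) (hd₁ : Measurable d₁) :
    MeasurableSet (typeC d₀ d₁) :=
  (hd₀ (measurableSet_singleton 0)).inter (hd₁ (measurableSet_singleton 1))

section Exclusion

variable [AddCommGroup E] [Module ℝ E] {y₁ u₁ y₀ u₀ : Ω → E}

-- Under monotonicity the units untreated in the encouraged arm are exactly the never-takers.
theorem switch_ae_eq_of_typeN (hd₀ : ∀ ω, d₀ ω = 0 ∨ d₀ ω = 1) (hd₁ : ∀ ω, d₁ ω = 0 ∨ d₁ ω = 1)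
    (hmon : ∀ᵐ ω ∂P, d₀ ω ≤ d₁ ω) (hexcl : ∀ᵐ ω ∂P, ω ∈ typeN d₀ d₁ → y₀ ω = u₀ ω) :
    switch d₁ y₁ y₀ =ᵐ[P] switch d₁ y₁ u₀ := by
  filter_upwards [hmon, hexcl] with ω hle hω
  rcases hd₁ ω with h₁ | h₁
  · have h₀ : d₀ ω = 0 := (hd₀ ω).resolve_right fun h => by norm_num [h, h₁] at hle
    simp only [switch, hω ⟨h₀, h₁⟩]
  · simp only [switch_of_eq_one _ _ h₁]

-- Under monotonicity the units treated in the unencouraged arm are exactly the always-takers.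
theorem switch_ae_eq_of_typeA (hd₀ : ∀ ω, d₀ ω = 0 ∨ d₀ ω = 1) (hd₁ : ∀ ω, d₁ ω = 0 ∨ d₁ ω = 1)
    (hmon : ∀ᵐ ω ∂P, d₀ ω ≤ d₁ ω) (hexcl : ∀ᵐ ω ∂P, ω ∈ typeA d₀ d₁ → y₁ ω = u₁ ω) :
    switch d₀ y₁ y₀ =ᵐ[P] switch d₀ u₁ y₀ := by
  filter_upwards [hmon, hexcl] with ω hle hω
  rcases hd₀ ω with h₀ | h₀
  · simp only [switch_of_eq_zero _ _ h₀]
  · have h₁ : d₁ ω = 1 := (hd₁ ω).resolve_left fun h => by norm_num [h, h₀] at hle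
    simp only [switch, hω ⟨h₀, h₁⟩]

end Exclusion

variable [NormedAddCommGroup E] [NormedSpace ℝ E] {y₁ y₀ : Ω → E}

theorem integral_switch_sub_integral_switch (hd₀m : Measurable d₀) (hd₁m : Measurable d₁)
    (hd₀ : ∀ ω, d₀ ω = 0 ∨ d₀ ω = 1) (hd₁ : ∀ ω, d₁ ω = 0 ∨ d₁ ω = 1)
    (hmon : ∀ᵐ ω ∂P, d₀ ω ≤ d₁ ω) (hy₁ : Integrable y₁ P) (hy₀ : Integrable y₀ P) :
    ∫ ω, switch d₁ y₁ y₀ ω ∂P - ∫ ω, switch d₀ y₁ y₀ ω ∂P =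
      ∫ ω in typeC d₀ d₁, (y₁ ω - y₀ ω) ∂P := by
  rw [← integral_sub (integrable_switch hd₁m hd₁ hy₁ hy₀) (integrable_switch hd₀m hd₀ hy₁ hy₀),
    ← integral_indicator (measurableSet_typeC hd₀m hd₁m)]
  refine integral_congr_ae ?_
  filter_upwards [hmon] with ω hle
  rw [switch_sub_switch]
  exact sub_smul_eq_indicator_typeC (hd₀ ω) (hd₁ ω) hle fun ω => y₁ ω - y₀ ω

-- Besides the effect of the instrument on the outcome, this covers its effect on the treatment:
-- take `y₁ = 1`, `y₀ = 0` and `wᵢ = dᵢ`.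
theorem integral_cond_sub_integral_cond_eq_setIntegral_typeC [IsFiniteMeasure P]
    [MeasurableSpace E] [BorelSpace E] {Z : Ω → ℝ} {w₁ w₀ : Ω → E}
    (hd₀m : Measurable d₀) (hd₁m : Measurable d₁)
    (hd₀ : ∀ ω, d₀ ω = 0 ∨ d₀ ω = 1) (hd₁ : ∀ ω, d₁ ω = 0 ∨ d₁ ω = 1)
    (hmon : ∀ᵐ ω ∂P, d₀ ω ≤ d₁ ω) (hy₁ : Integrable y₁ P) (hy₀ : Integrable y₀ P)
    (hZ : Measurable Z) (hZ₁ : P {ω | Z ω = 1} ≠ 0) (hZ₀ : P {ω | Z ω = 0} ≠ 0)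
    (hw₁ : w₁ =ᵐ[P] switch d₁ y₁ y₀) (hw₀ : w₀ =ᵐ[P] switch d₀ y₁ y₀)
    (hind₁ : IndepFun w₁ Z P) (hind₀ : IndepFun w₀ Z P) :
    ∫ ω, switch Z w₁ w₀ ω ∂P[|{ω | Z ω = 1}] - ∫ ω, switch Z w₁ w₀ ω ∂P[|{ω | Z ω = 0}] =
      ∫ ω in typeC d₀ d₁, (y₁ ω - y₀ ω) ∂P := by
  have hw₁m : AEMeasurable w₁ P :=
    (integrable_switch hd₁m hd₁ hy₁ hy₀).aemeasurable.congr hw₁.symm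
  have hw₀m : AEMeasurable w₀ P :=
    (integrable_switch hd₀m hd₀ hy₁ hy₀).aemeasurable.congr hw₀.symm
  calc ∫ ω, switch Z w₁ w₀ ω ∂P[|{ω | Z ω = 1}] - ∫ ω, switch Z w₁ w₀ ω ∂P[|{ω | Z ω = 0}]
      = ∫ ω, w₁ ω ∂P - ∫ ω, w₀ ω ∂P := congrArg₂ (· - ·)
        (integral_cond_eq_integral_of_indepFun (s := {1}) hw₁m hZ
          (measurableSet_singleton 1) hind₁ hZ₁ fun _ => switch_of_eq_one w₁ w₀)
        (integral_cond_eq_integral_of_indepFun (s := {0}) hw₀m hZ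
          (measurableSet_singleton 0) hind₀ hZ₀ fun _ => switch_of_eq_zero w₁ w₀)
    _ = ∫ ω, switch d₁ y₁ y₀ ω ∂P - ∫ ω, switch d₀ y₁ y₀ ω ∂P := by
        rw [integral_congr_ae hw₁, integral_congr_ae hw₀]
    _ = ∫ ω in typeC d₀ d₁, (y₁ ω - y₀ ω) ∂P :=
        integral_switch_sub_integral_switch hd₀m hd₁m hd₀ hd₁ hmon hy₁ hy₀

end Compliers

theorem measure_setOf_eq_zero_pos {Ω : Type*} [MeasurableSpace Ω] {P : Measure Ω}
    [IsProbabilityMeasure P] {Z : Ω → ℝ} (hZ : ∀ ω, Z ω = 0 ∨ Z ω = 1)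
    (hZlt : P {ω | Z ω = 1} < 1) : 0 < P {ω | Z ω = 0} := by
  refine pos_iff_ne_zero.2 fun h => hZlt.ne ?_
  have hae : ∀ᵐ ω ∂P, Z ω = 1 := by
    filter_upwards [measure_eq_zero_iff_ae_notMem.1 h] with ω hω using (hZ ω).resolve_left hω
  exact (measure_congr (Filter.eventuallyEq_univ.2 hae)).trans measure_univ

theorem late_wald_identification_general
    {Ω E : Type*} [MeasurableSpace Ω] [NormedAddCommGroup E] [NormedSpace ℝ E] [CompleteSpace E]
    [MeasurableSpace E] [BorelSpace E] (P : Measure Ω) [IsProbabilityMeasure P]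
    (Y11 Y10 Y01 Y00 Y : Ω → E) (D0 D1 Z D : Ω → ℝ)
    (hD0m : Measurable D0) (hD1m : Measurable D1) (hZm : Measurable Z)
    (hD0b : ∀ ω, D0 ω = 0 ∨ D0 ω = 1) (hD1b : ∀ ω, D1 ω = 0 ∨ D1 ω = 1)
    (hZb : ∀ ω, Z ω = 0 ∨ Z ω = 1)
    (hZpos : 0 < P {ω | Z ω = 1}) (hZlt : P {ω | Z ω = 1} < 1)
    (hDdef : D = switch Z D1 D0) (hYdef : Y = switch D (switch Z Y11 Y10) (switch Z Y01 Y00))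
    (RA1 : IndepFun (fun ω => (Y11 ω, Y01 ω, D1 ω)) Z P)
    (RA0 : IndepFun (fun ω => (Y10 ω, Y00 ω, D0 ω)) Z P)
    (ER1 : ∀ᵐ ω ∂P, ω ∈ typeA D0 D1 → Y11 ω = Y10 ω)
    (ER0 : ∀ᵐ ω ∂P, ω ∈ typeN D0 D1 → Y01 ω = Y00 ω)
    (MON : ∀ᵐ ω ∂P, D0 ω ≤ D1 ω)
    (hY1int : Integrable Y11 P) (hY0int : Integrable Y00 P)
    (hfs : pr P {ω | Z ω = 1} {ω | D ω = 1} > pr P {ω | Z ω = 0} {ω | D ω = 1}) :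
    0 < P.real (typeC D0 D1) ∧
      ∫ ω, (Y11 ω - Y00 ω) ∂P[|typeC D0 D1] =
        (ce P {ω | Z ω = 1} D - ce P {ω | Z ω = 0} D)⁻¹ •
          (∫ ω, Y ω ∂P[|{ω | Z ω = 1}] - ∫ ω, Y ω ∂P[|{ω | Z ω = 0}]) := by
  subst hYdef hDdef
  have hZ0 : P {ω | Z ω = 0} ≠ 0 := (measure_setOf_eq_zero_pos hZb hZlt).ne'
  have first_stage : ce P {ω | Z ω = 1} (switch Z D1 D0) - ce P {ω | Z ω = 0} (switch Z D1 D0) =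
      P.real (typeC D0 D1) := by
    simpa [ce] using integral_cond_sub_integral_cond_eq_setIntegral_typeC hD0m hD1m hD0b hD1b MON
      (integrable_const (1 : ℝ)) (integrable_zero Ω ℝ P) hZm hZpos.ne' hZ0
      (.of_eq (switch_one_zero D1).symm) (.of_eq (switch_one_zero D0).symm)
      (RA1.comp measurable_snd.snd measurable_id) (RA0.comp measurable_snd.snd measurable_id)
  have reduced_form :
      ∫ ω, switch Z (switch D1 Y11 Y01) (switch D0 Y10 Y00) ω ∂P[|{ω | Z ω = 1}] -
          ∫ ω, switch Z (switch D1 Y11 Y01) (switch D0 Y10 Y00) ω ∂P[|{ω | Z ω = 0}] =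
        ∫ ω in typeC D0 D1, (Y11 ω - Y00 ω) ∂P :=
    integral_cond_sub_integral_cond_eq_setIntegral_typeC hD0m hD1m hD0b hD1b MON hY1int hY0int hZm
      hZpos.ne' hZ0 (switch_ae_eq_of_typeN hD0b hD1b MON ER0)
      (switch_ae_eq_of_typeA hD0b hD1b MON (ER1.mono fun _ h hA => (h hA).symm))
      (indepFun_switch hD1b RA1) (indepFun_switch hD0b RA0)
  have hDm : Measurable (switch Z D1 D0) := by unfold switch; fun_prop
  rw [pr_eq_ce_of_binary _ hDm (switch_binary hZb hD1b hD0b),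
    pr_eq_ce_of_binary _ hDm (switch_binary hZb hD1b hD0b)] at hfs
  refine ⟨first_stage ▸ sub_pos.2 hfs, ?_⟩
  rw [switch_switch hZb, reduced_form, first_stage, integral_cond_eq_inv_smul_setIntegral]

theorem late_wald_identification
    {Ω : Type*} [MeasurableSpace Ω] (P : Measure Ω) [IsProbabilityMeasure P]
    (Y11 Y10 Y01 Y00 D0 D1 Z D Y : Ω → ℝ)
    (hY11m : Measurable Y11) (hY10m : Measurable Y10)
    (hY01m : Measurable Y01) (hY00m : Measurable Y00)
    (hD0m : Measurable D0) (hD1m : Measurable D1) (hZm : Measurable Z)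
    (hD0b : ∀ ω, D0 ω = 0 ∨ D0 ω = 1) (hD1b : ∀ ω, D1 ω = 0 ∨ D1 ω = 1)
    (hZb : ∀ ω, Z ω = 0 ∨ Z ω = 1)
    (hZpos : 0 < P {ω | Z ω = 1}) (hZlt : P {ω | Z ω = 1} < 1)
    (hDdef : ∀ ω, D ω = D1 ω * Z ω + D0 ω * (1 - Z ω))
    (hYdef : ∀ ω, Y ω = (Y11 ω * Z ω + Y10 ω * (1 - Z ω)) * D ω
        + (Y01 ω * Z ω + Y00 ω * (1 - Z ω)) * (1 - D ω))
    (RA : IndepFun (fun ω => (Y11 ω, Y10 ω, Y01 ω, Y00 ω, D0 ω, D1 ω)) Z P)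
    (ER1 : ∀ᵐ ω ∂P, Y11 ω = Y10 ω) (ER0 : ∀ᵐ ω ∂P, Y01 ω = Y00 ω)
    (MON : ∀ᵐ ω ∂P, D0 ω ≤ D1 ω)
    (hY1int : Integrable Y11 P) (hY0int : Integrable Y00 P)
    (hfs : pr P {ω | Z ω = 1} {ω | D ω = 1} > pr P {ω | Z ω = 0} {ω | D ω = 1}) :
    0 < (P (typeC D0 D1)).toReal
  ∧ ce P (typeC D0 D1) (fun ω => Y11 ω - Y00 ω)
      = (ce P {ω | Z ω = 1} Y - ce P {ω | Z ω = 0} Y)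
        / (ce P {ω | Z ω = 1} D - ce P {ω | Z ω = 0} D) := by
  rw [div_eq_inv_mul]
  exact late_wald_identification_general P Y11 Y10 Y01 Y00 Y D0 D1 Z D hD0m hD1m hZm hD0b hD1b hZb
    hZpos hZlt (funext fun ω => by simp only [switch, hDdef, smul_eq_mul]; ring)
    (funext fun ω => by simp only [switch, hYdef, smul_eq_mul]; ring)
    (RA.comp (φ := fun v => (v.1, v.2.2.1, v.2.2.2.2.2)) (by fun_prop) measurable_id)
    (RA.comp (φ := fun v => (v.2.1, v.2.2.2.1, v.2.2.2.2.1)) (by fun_prop) measurable_id)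
    (ER1.mono fun _ h _ => h) (ER0.mono fun _ h _ => h) MON hY1int hY0int hfs
end

section
/- Assume RA and ER. Then the following testable implication of these two assumptions holds: for each d ∈ {0,1} and every Borel set A ⊆ ℝ, P(Y∈A, D=d | Z=1) + P(Y∈ℝ∖A, D=d | Z=0) ≤ 1. (This is the set-wise formulation of the density condition max_d ∫ sup_z f_{Y,D|Z}(y,d|z) dμ(y) ≤ 1.) -/
open MeasureTheory ProbabilityTheory

/-!
On `{Z = z}`, observing `Y ∈ B` together with `D = d` forces the potential outcome `Y_dz` to lie in
`B`, and `Z` carries no information about `Y_dz`. The two conditional probabilities are therefore at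
most `P(Y_dz ∈ A)` and `P(Y_dz' ∉ A)`. Exclusion gives `Y_dz` and `Y_dz'` the same law, so these two
bounds add up to `1`.
-/

section TestableImplication

variable {Ω 𝓨 𝓓 𝓩 : Type*} [MeasurableSpace Ω] [MeasurableSpace 𝓨] [MeasurableSpace 𝓩]
  {P : Measure Ω} {Z : Ω → 𝓩} {z : 𝓩}

theorem pr_mono_ae {s t t' : Set Ω} (hs : MeasurableSet s)
    (h : ∀ᵐ ω ∂P, ω ∈ s → ω ∈ t → ω ∈ t') : pr P s t ≤ pr P s t' := by
  refine ENNReal.toReal_mono (measure_ne_top _ _) (measure_mono_ae ?_)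
  filter_upwards [ae_cond_mem hs, cond_absolutelyContinuous.ae_le h] with ω hω himp
  exact himp hω

variable [MeasurableSingletonClass 𝓩]

theorem pr_preimage_eq_of_indepFun [IsFiniteMeasure P] {W : Ω → 𝓨} (hind : IndepFun W Z P)
    (hZ : Measurable Z) (hz : P {ω | Z ω = z} ≠ 0) {B : Set 𝓨} (hB : MeasurableSet B) :
    pr P {ω | Z ω = z} (W ⁻¹' B) = P.real (W ⁻¹' B) := by
  refine congrArg ENNReal.toReal ?_
  calc P[W ⁻¹' B | Z ⁻¹' {z}]
      = (P (Z ⁻¹' {z}))⁻¹ * P (W ⁻¹' B ∩ Z ⁻¹' {z}) := by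
        rw [cond_apply (hZ (measurableSet_singleton z)), Set.inter_comm]
    _ = (P (Z ⁻¹' {z}))⁻¹ * (P (Z ⁻¹' {z}) * P (W ⁻¹' B)) := by
        rw [hind.measure_inter_preimage_eq_mul B {z} hB (measurableSet_singleton z), mul_comm (P _)]
    _ = P (W ⁻¹' B) := ENNReal.inv_mul_cancel_left hz (measure_ne_top _ _)

variable {Ypot : 𝓓 → 𝓩 → Ω → 𝓨} {Y : Ω → 𝓨} {D : Ω → 𝓓} {d : 𝓓}

theorem pr_observed_le_potential [IsFiniteMeasure P] (hZ : Measurable Z)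
    (hz : P {ω | Z ω = z} ≠ 0) (hY : ∀ᵐ ω ∂P, Y ω = Ypot (D ω) (Z ω) ω)
    (hind : IndepFun (Ypot d z) Z P) {B : Set 𝓨} (hB : MeasurableSet B) :
    pr P {ω | Z ω = z} {ω | Y ω ∈ B ∧ D ω = d} ≤ P.real (Ypot d z ⁻¹' B) := by
  rw [← pr_preimage_eq_of_indepFun hind hZ hz hB]
  refine pr_mono_ae (hZ (measurableSet_singleton z)) ?_
  filter_upwards [hY] with ω hYω
  rintro rfl ⟨hYB, rfl⟩
  rwa [Set.mem_preimage, ← hYω]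

theorem ra_er_testable_implication_general [IsProbabilityMeasure P] {z' : 𝓩}
    (hZ : Measurable Z) (hz : P {ω | Z ω = z} ≠ 0) (hz' : P {ω | Z ω = z'} ≠ 0)
    (hY : ∀ᵐ ω ∂P, Y ω = Ypot (D ω) (Z ω) ω)
    (RA : IndepFun (Ypot d z) Z P) (RA' : IndepFun (Ypot d z') Z P)
    (ER : IdentDistrib (Ypot d z) (Ypot d z') P P) {A : Set 𝓨} (hA : MeasurableSet A) :
    pr P {ω | Z ω = z} {ω | Y ω ∈ A ∧ D ω = d}
      + pr P {ω | Z ω = z'} {ω | Y ω ∉ A ∧ D ω = d} ≤ 1 :=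
  calc pr P {ω | Z ω = z} {ω | Y ω ∈ A ∧ D ω = d}
        + pr P {ω | Z ω = z'} {ω | Y ω ∉ A ∧ D ω = d}
      ≤ P.real (Ypot d z ⁻¹' A) + P.real (Ypot d z' ⁻¹' Aᶜ) :=
        add_le_add (pr_observed_le_potential hZ hz hY RA hA)
          (pr_observed_le_potential hZ hz' hY RA' hA.compl)
    _ = P.real (Ypot d z ⁻¹' A) + P.real (Ypot d z ⁻¹' A)ᶜ := by
        simp only [Measure.real, ← Set.preimage_compl, ER.measure_mem_eq hA.compl]
    _ = P.real Set.univ :=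
        measureReal_add_measureReal_compl₀ (ER.aemeasurable_fst.nullMeasurableSet_preimage hA)
    _ = 1 := probReal_univ

end TestableImplication

theorem ra_er_testable_implication
    {Ω : Type*} [MeasurableSpace Ω] (P : Measure Ω) [IsProbabilityMeasure P]
    (Y11 Y10 Y01 Y00 D0 D1 Z D Y : Ω → ℝ)
    (hY11m : Measurable Y11) (hY10m : Measurable Y10)
    (hY01m : Measurable Y01) (hY00m : Measurable Y00)
    (hD0m : Measurable D0) (hD1m : Measurable D1) (hZm : Measurable Z)
    (hD0b : ∀ ω, D0 ω = 0 ∨ D0 ω = 1) (hD1b : ∀ ω, D1 ω = 0 ∨ D1 ω = 1)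
    (hZb : ∀ ω, Z ω = 0 ∨ Z ω = 1)
    (hZpos : 0 < P {ω | Z ω = 1}) (hZlt : P {ω | Z ω = 1} < 1)
    (hDdef : ∀ ω, D ω = D1 ω * Z ω + D0 ω * (1 - Z ω))
    (hYdef : ∀ ω, Y ω = (Y11 ω * Z ω + Y10 ω * (1 - Z ω)) * D ω
        + (Y01 ω * Z ω + Y00 ω * (1 - Z ω)) * (1 - D ω))
    (RA : IndepFun (fun ω => (Y11 ω, Y10 ω, Y01 ω, Y00 ω, D0 ω, D1 ω)) Z P)
    (ER1 : ∀ᵐ ω ∂P, Y11 ω = Y10 ω) (ER0 : ∀ᵐ ω ∂P, Y01 ω = Y00 ω)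
    (A : Set ℝ) (hA : MeasurableSet A) :
    ∀ d : ℝ, d = 0 ∨ d = 1 →
      pr P {ω | Z ω = 1} {ω | Y ω ∈ A ∧ D ω = d}
        + pr P {ω | Z ω = 0} {ω | Y ω ∉ A ∧ D ω = d} ≤ 1 := by
  have hZ0 : P {ω | Z ω = 0} ≠ 0 := fun h0 ↦
    hZlt.ne <| (prob_compl_eq_zero_iff (hZm (measurableSet_singleton 1))).1 <|
      measure_mono_null (fun ω hω ↦ (hZb ω).resolve_right hω) h0
  -- The switching equation `hYdef` is affine in `D` and in `Z`, so it extends to all real `d`, `z`.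
  let Ypot (d z : ℝ) (ω : Ω) : ℝ :=
    (Y11 ω * z + Y10 ω * (1 - z)) * d + (Y01 ω * z + Y00 ω * (1 - z)) * (1 - d)
  have hRA (d z : ℝ) : IndepFun (Ypot d z) Z P :=
    RA.comp (φ := fun y : ℝ × ℝ × ℝ × ℝ × ℝ × ℝ ↦
      (y.1 * z + y.2.1 * (1 - z)) * d + (y.2.2.1 * z + y.2.2.2.1 * (1 - z)) * (1 - d))
      (by fun_prop) measurable_id
  have hER (d : ℝ) : IdentDistrib (Ypot d 1) (Ypot d 0) P P := by
    refine .of_ae_eq (by fun_prop) ?_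
    filter_upwards [ER1, ER0] with ω h1 h0
    simp only [Ypot, h1, h0]
    ring
  exact fun d _ ↦ ra_er_testable_implication_general hZm hZpos.ne' hZ0 (.of_forall hYdef)
    (hRA d 1) (hRA d 0) (hER d) hA
end

section
/- Assume RA and ER. (i) If p_a > 0, then for every y ∈ ℝ: max{ (P(Y≤y, D=1 | Z=1) − p_c)/p_a, (P(Y≤y, D=1 | Z=0) − p_df)/p_a, 0 } ≤ P(Y₁≤y | T=a) ≤ min{ P(Y≤y, D=1 | Z=1)/p_a, P(Y≤y, D=1 | Z=0)/p_a, 1 }. (ii) If p_n > 0, then for every y ∈ ℝ: max{ (P(Y≤y, D=0 | Z=0) − p_c)/p_n, (P(Y≤y, D=0 | Z=1) − p_df)/p_n, 0 } ≤ P(Y₀≤y | T=n) ≤ min{ P(Y≤y, D=0 | Z=0)/p_n, P(Y≤y, D=0 | Z=1)/p_n, 1 }. (iii) If in addition p_c > 0, then for every y: P(Y₁≤y | T=c) = (P(Y≤y, D=1 | Z=1) − p_a·P(Y₁≤y | T=a))/p_c and P(Y₀≤y | T=c) = (P(Y≤y, D=0 | Z=0) − p_n·P(Y₀≤y | T=n))/p_c;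 and if p_df > 0, then for every y: P(Y₁≤y | T=df) = (P(Y≤y, D=1 | Z=0) − p_a·P(Y₁≤y | T=a))/p_df and P(Y₀≤y | T=df) = (P(Y≤y, D=0 | Z=1) − p_n·P(Y₀≤y | T=n))/p_df. -/
open MeasureTheory ProbabilityTheory

/-!
Given `Z = z`, consistency replaces `(Y, D)` by the potential pair `(Y_{D_z z}, D_z)`, and random
assignment then removes the conditioning. The event `D_z = d` is a disjoint union of two types,
so each of the four observed probabilities `P(Y ∈ B, D = d | Z = z)` is a sum of two joint
probabilities of an outcome and a type. The non-switching type (`a` if `d = 1`, `n` if `d = 0`)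
occurs for both values of `z`, the switching one is `c` for one value and `df` for the other.
Bounding the switching term between `0` and its type probability gives the bounds; solving for it
gives the identities.
-/

section ConditionalProbability

variable {Ω : Type*} [MeasurableSpace Ω] {P : Measure Ω} {s t u v : Set Ω} {q r : ℝ}

lemma pr_nonneg : 0 ≤ pr P t s := ENNReal.toReal_nonneg

lemma pr_le_one : pr P t s ≤ 1 := measureReal_le_one

lemma pr_congr_of_inter_eq (ht : MeasurableSet t) (h : t ∩ s = t ∩ u) : pr P t s = pr P t u := by
  simp only [pr, cond_apply ht, h]

lemma pr_eq_div (ht : MeasurableSet t) : pr P t s = P.real (t ∩ s) / P.real t := by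
  rw [pr, cond_apply ht, ENNReal.toReal_mul, ENNReal.toReal_inv, inv_mul_eq_div]
  rfl

lemma pr_le_div_of_eq_add (ht : MeasurableSet t)
    (hq : q = P.real (t ∩ s) + P.real (u ∩ s)) :
    pr P t s ≤ q / P.real t := by
  rw [pr_eq_div ht, hq]
  gcongr
  exact le_add_of_nonneg_right measureReal_nonneg

lemma measure_fiber_ne_zero_of_forall_or {G : Type*} [IsProbabilityMeasure P] {Z : Ω → G}
    {z0 z1 : G} (hZ : ∀ ω, Z ω = z0 ∨ Z ω = z1) (hlt : P {ω | Z ω = z1} < 1) :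
    P {ω | Z ω = z0} ≠ 0 := by
  intro hzero
  refine hlt.not_ge ?_
  calc
    1 = P Set.univ := measure_univ.symm
    _ ≤ P ({ω | Z ω = z0} ∪ {ω | Z ω = z1}) := measure_mono fun ω _ => hZ ω
    _ ≤ P {ω | Z ω = z0} + P {ω | Z ω = z1} := measure_union_le _ _
    _ = P {ω | Z ω = z1} := by rw [hzero, zero_add]

variable [IsFiniteMeasure P]

lemma measureReal_mul_pr (ht : MeasurableSet t) : P.real t * pr P t s = P.real (t ∩ s) := by
  simpa only [pr, Measure.real, ENNReal.toReal_mul, mul_comm] using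
    congrArg ENNReal.toReal (cond_mul_eq_inter ht s P)

lemma pr_preimage_eq_of_indepFun_s8 {E F : Type*} [MeasurableSpace E] [MeasurableSpace F]
    {X : Ω → E} {Z : Ω → F} (hXZ : IndepFun X Z P) (hZ : Measurable Z) {A : Set E} {C : Set F}
    (hA : MeasurableSet A) (hC : MeasurableSet C) (hC0 : P (Z ⁻¹' C) ≠ 0) :
    pr P (Z ⁻¹' C) (X ⁻¹' A) = P.real (X ⁻¹' A) := by
  have hC0' : P.real (Z ⁻¹' C) ≠ 0 := (measureReal_ne_zero_iff).2 hC0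
  have hmul : P.real (X ⁻¹' A ∩ Z ⁻¹' C) = P.real (X ⁻¹' A) * P.real (Z ⁻¹' C) := by
    simpa only [Measure.real, ENNReal.toReal_mul] using
      congrArg ENNReal.toReal (hXZ.measure_inter_preimage_eq_mul A C hA hC)
  rw [pr_eq_div (hZ hC), Set.inter_comm, hmul, mul_div_cancel_right₀ _ hC0']

lemma pr_eq_sub_div_of_eq_add (ht : MeasurableSet t) (hu : MeasurableSet u)
    (hq : q = P.real (t ∩ s) + P.real (u ∩ s)) :
    pr P u s = (q - P.real t * pr P t s) / P.real u := by
  rw [measureReal_mul_pr ht, hq, add_sub_cancel_left, pr_eq_div hu]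

lemma sub_div_le_pr_of_eq_add (ht : MeasurableSet t)
    (hq : q = P.real (t ∩ s) + P.real (u ∩ s)) :
    (q - P.real u) / P.real t ≤ pr P t s := by
  have hu : P.real (u ∩ s) ≤ P.real u := measureReal_mono Set.inter_subset_left
  rw [pr_eq_div ht]
  gcongr
  linarith

lemma pr_bounds_of_eq_add_of_eq_add (ht : MeasurableSet t)
    (hq : q = P.real (t ∩ s) + P.real (u ∩ s)) (hr : r = P.real (t ∩ s) + P.real (v ∩ s)) :
    max (max ((q - P.real u) / P.real t) ((r - P.real v) / P.real t)) 0 ≤ pr P t s ∧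
      pr P t s ≤ min (min (q / P.real t) (r / P.real t)) 1 :=
  ⟨max_le (max_le (sub_div_le_pr_of_eq_add ht hq) (sub_div_le_pr_of_eq_add ht hr)) pr_nonneg,
    le_min (le_min (pr_le_div_of_eq_add ht hq) (pr_le_div_of_eq_add ht hr)) pr_le_one⟩

end ConditionalProbability

section Types

variable {Ω : Type*} {D0 D1 : Ω → ℝ}

lemma typeA_union_typeC (hD0 : ∀ ω, D0 ω = 0 ∨ D0 ω = 1) :
    typeA D0 D1 ∪ typeC D0 D1 = {ω | D1 ω = 1} := by
  ext ω; rcases hD0 ω with h | h <;> simp [typeA, typeC, h]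

lemma typeA_union_typeDF (hD1 : ∀ ω, D1 ω = 0 ∨ D1 ω = 1) :
    typeA D0 D1 ∪ typeDF D0 D1 = {ω | D0 ω = 1} := by
  ext ω; rcases hD1 ω with h | h <;> simp [typeA, typeDF, h]

lemma typeN_union_typeC (hD1 : ∀ ω, D1 ω = 0 ∨ D1 ω = 1) :
    typeN D0 D1 ∪ typeC D0 D1 = {ω | D0 ω = 0} := by
  ext ω; rcases hD1 ω with h | h <;> simp [typeN, typeC, h]

lemma typeN_union_typeDF (hD0 : ∀ ω, D0 ω = 0 ∨ D0 ω = 1) :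
    typeN D0 D1 ∪ typeDF D0 D1 = {ω | D1 ω = 0} := by
  ext ω; rcases hD0 ω with h | h <;> simp [typeN, typeDF, h]

lemma disjoint_typeA_typeC : Disjoint (typeA D0 D1) (typeC D0 D1) :=
  Set.disjoint_left.2 fun _ ha hc => one_ne_zero (ha.1.symm.trans hc.1)

lemma disjoint_typeA_typeDF : Disjoint (typeA D0 D1) (typeDF D0 D1) :=
  Set.disjoint_left.2 fun _ ha hdf => one_ne_zero (ha.2.symm.trans hdf.2)

lemma disjoint_typeN_typeC : Disjoint (typeN D0 D1) (typeC D0 D1) :=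
  Set.disjoint_left.2 fun _ hn hc => zero_ne_one (hn.2.symm.trans hc.2)

lemma disjoint_typeN_typeDF : Disjoint (typeN D0 D1) (typeDF D0 D1) :=
  Set.disjoint_left.2 fun _ hn hdf => zero_ne_one (hn.1.symm.trans hdf.1)

variable [MeasurableSpace Ω]

lemma measurableSet_typeA (hD0 : Measurable D0) (hD1 : Measurable D1) :
    MeasurableSet (typeA D0 D1) :=
  (hD0 (measurableSet_singleton 1)).inter (hD1 (measurableSet_singleton 1))

lemma measurableSet_typeN (hD0 : Measurable D0) (hD1 : Measurable D1) :
    MeasurableSet (typeN D0 D1) :=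
  (hD0 (measurableSet_singleton 0)).inter (hD1 (measurableSet_singleton 0))

lemma measurableSet_typeC_s8 (hD0 : Measurable D0) (hD1 : Measurable D1) :
    MeasurableSet (typeC D0 D1) :=
  (hD0 (measurableSet_singleton 0)).inter (hD1 (measurableSet_singleton 1))

lemma measurableSet_typeDF (hD0 : Measurable D0) (hD1 : Measurable D1) :
    MeasurableSet (typeDF D0 D1) :=
  (hD0 (measurableSet_singleton 1)).inter (hD1 (measurableSet_singleton 0))

end Types

section InstrumentArm

variable {Ω E F G : Type*} [MeasurableSpace Ω] [MeasurableSpace E] [MeasurableSpace F]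
  [MeasurableSpace G]

/-- The arm of an instrumental-variable design in which the instrument `Z` takes the value `z` and
the treatment `D` the value `d`. Here `T` is the potential treatment `D_z` and `W` the potential
outcome `Y_{dz}`. Random assignment is imposed on the pair `(Y_{dz}, D_z)` alone, and consistency of
the observed data on the event `Z = z` alone. -/
structure IsInstrumentArm (P : Measure Ω) (Z : Ω → G) (z : G) (D T : Ω → F) (d : F)
    (Y W : Ω → E) : Prop where
  measurable_instrument : Measurable Z
  measure_ne_zero : P {ω | Z ω = z} ≠ 0
  indepFun : IndepFun (fun ω => (W ω, T ω)) Z P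
  treatment_eq : ∀ ω, Z ω = z → D ω = T ω
  outcome_eq : ∀ ω, Z ω = z → D ω = d → Y ω = W ω

namespace IsInstrumentArm

variable {P : Measure Ω} {Z : Ω → G} {z : G} {D T : Ω → F} {d : F} {Y W V : Ω → E}
  {B : Set E} {t u : Set Ω}

lemma inter_observed_eq_inter_potential (h : IsInstrumentArm P Z z D T d Y W) :
    {ω | Z ω = z} ∩ {ω | Y ω ∈ B ∧ D ω = d} = {ω | Z ω = z} ∩ {ω | W ω ∈ B ∧ T ω = d} := by
  ext ω
  refine and_congr_right fun hz : Z ω = z => ?_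
  change Y ω ∈ B ∧ D ω = d ↔ W ω ∈ B ∧ T ω = d
  rw [← h.treatment_eq ω hz]
  exact and_congr_left fun hd => by rw [h.outcome_eq ω hz hd]

variable [MeasurableSingletonClass F] [MeasurableSingletonClass G] [IsFiniteMeasure P]

lemma pr_observed_eq_measureReal_potential (h : IsInstrumentArm P Z z D T d Y W)
    (hB : MeasurableSet B) :
    pr P {ω | Z ω = z} {ω | Y ω ∈ B ∧ D ω = d} = P.real {ω | W ω ∈ B ∧ T ω = d} := by
  have hz : MeasurableSet {ω | Z ω = z} := h.measurable_instrument (measurableSet_singleton z)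
  rw [pr_congr_of_inter_eq hz h.inter_observed_eq_inter_potential]
  exact pr_preimage_eq_of_indepFun_s8 (A := B ×ˢ {d}) (C := {z}) h.indepFun h.measurable_instrument
    (hB.prod (measurableSet_singleton d)) (measurableSet_singleton z) h.measure_ne_zero

lemma pr_observed_eq_add (h : IsInstrumentArm P Z z D T d Y W) (hVW : V =ᵐ[P] W)
    (ht : MeasurableSet t) (htu : Disjoint t u) (htu_eq : t ∪ u = {ω | T ω = d})
    (hB : MeasurableSet B) :
    pr P {ω | Z ω = z} {ω | Y ω ∈ B ∧ D ω = d} =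
      P.real (t ∩ {ω | V ω ∈ B}) + P.real (u ∩ {ω | V ω ∈ B}) := by
  have hunion : ({ω | W ω ∈ B ∧ T ω = d} : Set Ω) =ᵐ[P] ((t ∪ u) ∩ {ω | V ω ∈ B} : Set Ω) := by
    rw [htu_eq]
    refine Filter.Eventually.set_eq ?_
    filter_upwards [hVW] with ω hω
    simp only [Set.mem_inter_iff, Set.mem_ofPred_eq, hω, and_comm]
  have hinter : (t ∪ u) ∩ {ω | V ω ∈ B} ∩ t = t ∩ {ω | V ω ∈ B} := by
    rw [Set.inter_right_comm, Set.union_inter_cancel_left]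
  have hsdiff : ((t ∪ u) ∩ {ω | V ω ∈ B}) \ t = u ∩ {ω | V ω ∈ B} := by
    rw [Set.inter_sdiff_right_comm, Set.union_sdiff_cancel_left htu.le_bot]
  rw [h.pr_observed_eq_measureReal_potential hB, measureReal_congr hunion,
    ← measureReal_inter_add_sdiff ht, hinter, hsdiff]

end IsInstrumentArm

lemma isInstrumentArm_of_randomAssignment {P : Measure Ω}
    {Y11 Y10 Y01 Y00 D0 D1 Z D Y : Ω → ℝ} (hZm : Measurable Z)
    (hZ1 : P {ω | Z ω = 1} ≠ 0) (hZ0 : P {ω | Z ω = 0} ≠ 0)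
    (hD : ∀ ω, D ω = D1 ω * Z ω + D0 ω * (1 - Z ω))
    (hY : ∀ ω, Y ω = (Y11 ω * Z ω + Y10 ω * (1 - Z ω)) * D ω
        + (Y01 ω * Z ω + Y00 ω * (1 - Z ω)) * (1 - D ω))
    (hRA : IndepFun (fun ω => (Y11 ω, Y10 ω, Y01 ω, Y00 ω, D0 ω, D1 ω)) Z P) :
    IsInstrumentArm P Z 1 D D1 1 Y Y11 ∧ IsInstrumentArm P Z 0 D D0 1 Y Y10 ∧
      IsInstrumentArm P Z 1 D D1 0 Y Y01 ∧ IsInstrumentArm P Z 0 D D0 0 Y Y00 := by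
  have hcomp {φ : ℝ × ℝ × ℝ × ℝ × ℝ × ℝ → ℝ × ℝ} (hφ : Measurable φ) := hRA.comp hφ measurable_id
  have hD1 (ω : Ω) (hz : Z ω = 1) : D ω = D1 ω := by rw [hD, hz]; ring
  have hD0 (ω : Ω) (hz : Z ω = 0) : D ω = D0 ω := by rw [hD, hz]; ring
  refine ⟨⟨hZm, hZ1, ?_, hD1, ?_⟩, ⟨hZm, hZ0, ?_, hD0, ?_⟩,
    ⟨hZm, hZ1, ?_, hD1, ?_⟩, ⟨hZm, hZ0, ?_, hD0, ?_⟩⟩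
  · exact hcomp (φ := fun x => (x.1, x.2.2.2.2.2)) (by fun_prop)
  · intro ω hz hd; rw [hY, hz, hd]; ring
  · exact hcomp (φ := fun x => (x.2.1, x.2.2.2.2.1)) (by fun_prop)
  · intro ω hz hd; rw [hY, hz, hd]; ring
  · exact hcomp (φ := fun x => (x.2.2.1, x.2.2.2.2.2)) (by fun_prop)
  · intro ω hz hd; rw [hY, hz, hd]; ring
  · exact hcomp (φ := fun x => (x.2.2.2.1, x.2.2.2.2.1)) (by fun_prop)
  · intro ω hz hd; rw [hY, hz, hd]; ring

end InstrumentArm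

theorem distribution_bounds_ra_er_general
    {Ω E G : Type*} [MeasurableSpace Ω] [MeasurableSpace E] [MeasurableSpace G]
    [MeasurableSingletonClass G] {P : Measure Ω} [IsFiniteMeasure P]
    {Y11 Y10 Y01 Y00 Y : Ω → E} {D0 D1 D : Ω → ℝ} {Z : Ω → G} {z0 z1 : G}
    (hD0m : Measurable D0) (hD1m : Measurable D1)
    (hD0b : ∀ ω, D0 ω = 0 ∨ D0 ω = 1) (hD1b : ∀ ω, D1 ω = 0 ∨ D1 ω = 1)
    (arm11 : IsInstrumentArm P Z z1 D D1 1 Y Y11) (arm10 : IsInstrumentArm P Z z0 D D0 1 Y Y10)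
    (arm01 : IsInstrumentArm P Z z1 D D1 0 Y Y01) (arm00 : IsInstrumentArm P Z z0 D D0 0 Y Y00)
    (ER1 : Y11 =ᵐ[P] Y10) (ER0 : Y01 =ᵐ[P] Y00) {B : Set E} (hB : MeasurableSet B)
    (pa pn pc pdf : ℝ)
    (hpa : pa = P.real (typeA D0 D1)) (hpn : pn = P.real (typeN D0 D1))
    (hpc : pc = P.real (typeC D0 D1)) (hpdf : pdf = P.real (typeDF D0 D1)) :
    (0 < pa →
      max (max ((pr P {ω | Z ω = z1} {ω | Y ω ∈ B ∧ D ω = 1} - pc) / pa)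
              ((pr P {ω | Z ω = z0} {ω | Y ω ∈ B ∧ D ω = 1} - pdf) / pa)) 0
        ≤ pr P (typeA D0 D1) {ω | Y11 ω ∈ B}
      ∧ pr P (typeA D0 D1) {ω | Y11 ω ∈ B}
        ≤ min (min (pr P {ω | Z ω = z1} {ω | Y ω ∈ B ∧ D ω = 1} / pa)
                  (pr P {ω | Z ω = z0} {ω | Y ω ∈ B ∧ D ω = 1} / pa)) 1)
  ∧ (0 < pn →
      max (max ((pr P {ω | Z ω = z0} {ω | Y ω ∈ B ∧ D ω = 0} - pc) / pn)
              ((pr P {ω | Z ω = z1} {ω | Y ω ∈ B ∧ D ω = 0} - pdf) / pn)) 0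
        ≤ pr P (typeN D0 D1) {ω | Y00 ω ∈ B}
      ∧ pr P (typeN D0 D1) {ω | Y00 ω ∈ B}
        ≤ min (min (pr P {ω | Z ω = z0} {ω | Y ω ∈ B ∧ D ω = 0} / pn)
                  (pr P {ω | Z ω = z1} {ω | Y ω ∈ B ∧ D ω = 0} / pn)) 1)
  ∧ (0 < pa → 0 < pc →
      pr P (typeC D0 D1) {ω | Y11 ω ∈ B}
        = (pr P {ω | Z ω = z1} {ω | Y ω ∈ B ∧ D ω = 1}
            - pa * pr P (typeA D0 D1) {ω | Y11 ω ∈ B}) / pc)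
  ∧ (0 < pn → 0 < pc →
      pr P (typeC D0 D1) {ω | Y00 ω ∈ B}
        = (pr P {ω | Z ω = z0} {ω | Y ω ∈ B ∧ D ω = 0}
            - pn * pr P (typeN D0 D1) {ω | Y00 ω ∈ B}) / pc)
  ∧ (0 < pa → 0 < pdf →
      pr P (typeDF D0 D1) {ω | Y11 ω ∈ B}
        = (pr P {ω | Z ω = z0} {ω | Y ω ∈ B ∧ D ω = 1}
            - pa * pr P (typeA D0 D1) {ω | Y11 ω ∈ B}) / pdf)
  ∧ (0 < pn → 0 < pdf →
      pr P (typeDF D0 D1) {ω | Y00 ω ∈ B}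
        = (pr P {ω | Z ω = z1} {ω | Y ω ∈ B ∧ D ω = 0}
            - pn * pr P (typeN D0 D1) {ω | Y00 ω ∈ B}) / pdf) := by
  subst hpa hpn hpc hpdf
  have hA := measurableSet_typeA hD0m hD1m
  have hN := measurableSet_typeN hD0m hD1m
  have hC := measurableSet_typeC_s8 hD0m hD1m
  have hDF := measurableSet_typeDF hD0m hD1m
  have hAC := arm11.pr_observed_eq_add .rfl hA disjoint_typeA_typeC (typeA_union_typeC hD0b) hB
  have hADF := arm10.pr_observed_eq_add ER1 hA disjoint_typeA_typeDF (typeA_union_typeDF hD1b) hB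
  have hNC := arm00.pr_observed_eq_add .rfl hN disjoint_typeN_typeC (typeN_union_typeC hD1b) hB
  have hNDF :=
    arm01.pr_observed_eq_add ER0.symm hN disjoint_typeN_typeDF (typeN_union_typeDF hD0b) hB
  exact ⟨fun _ => pr_bounds_of_eq_add_of_eq_add hA hAC hADF,
    fun _ => pr_bounds_of_eq_add_of_eq_add hN hNC hNDF,
    fun _ _ => pr_eq_sub_div_of_eq_add hA hC hAC, fun _ _ => pr_eq_sub_div_of_eq_add hN hC hNC,
    fun _ _ => pr_eq_sub_div_of_eq_add hA hDF hADF,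
    fun _ _ => pr_eq_sub_div_of_eq_add hN hDF hNDF⟩

theorem distribution_bounds_ra_er
    {Ω : Type*} [MeasurableSpace Ω] (P : Measure Ω) [IsProbabilityMeasure P]
    (Y11 Y10 Y01 Y00 D0 D1 Z D Y : Ω → ℝ)
    (hY11m : Measurable Y11) (hY10m : Measurable Y10)
    (hY01m : Measurable Y01) (hY00m : Measurable Y00)
    (hD0m : Measurable D0) (hD1m : Measurable D1) (hZm : Measurable Z)
    (hD0b : ∀ ω, D0 ω = 0 ∨ D0 ω = 1) (hD1b : ∀ ω, D1 ω = 0 ∨ D1 ω = 1)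
    (hZb : ∀ ω, Z ω = 0 ∨ Z ω = 1)
    (hZpos : 0 < P {ω | Z ω = 1}) (hZlt : P {ω | Z ω = 1} < 1)
    (hDdef : ∀ ω, D ω = D1 ω * Z ω + D0 ω * (1 - Z ω))
    (hYdef : ∀ ω, Y ω = (Y11 ω * Z ω + Y10 ω * (1 - Z ω)) * D ω
        + (Y01 ω * Z ω + Y00 ω * (1 - Z ω)) * (1 - D ω))
    (RA : IndepFun (fun ω => (Y11 ω, Y10 ω, Y01 ω, Y00 ω, D0 ω, D1 ω)) Z P)
    (ER1 : ∀ᵐ ω ∂P, Y11 ω = Y10 ω) (ER0 : ∀ᵐ ω ∂P, Y01 ω = Y00 ω)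
    (pa pn pc pdf : ℝ)
    (hpa : pa = (P (typeA D0 D1)).toReal) (hpn : pn = (P (typeN D0 D1)).toReal)
    (hpc : pc = (P (typeC D0 D1)).toReal) (hpdf : pdf = (P (typeDF D0 D1)).toReal) :
    (0 < pa → ∀ y : ℝ,
      max (max ((pr P {ω | Z ω = 1} {ω | Y ω ≤ y ∧ D ω = 1} - pc) / pa)
              ((pr P {ω | Z ω = 0} {ω | Y ω ≤ y ∧ D ω = 1} - pdf) / pa)) 0
        ≤ pr P (typeA D0 D1) {ω | Y11 ω ≤ y}
      ∧ pr P (typeA D0 D1) {ω | Y11 ω ≤ y}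
        ≤ min (min (pr P {ω | Z ω = 1} {ω | Y ω ≤ y ∧ D ω = 1} / pa)
                  (pr P {ω | Z ω = 0} {ω | Y ω ≤ y ∧ D ω = 1} / pa)) 1)
  ∧ (0 < pn → ∀ y : ℝ,
      max (max ((pr P {ω | Z ω = 0} {ω | Y ω ≤ y ∧ D ω = 0} - pc) / pn)
              ((pr P {ω | Z ω = 1} {ω | Y ω ≤ y ∧ D ω = 0} - pdf) / pn)) 0
        ≤ pr P (typeN D0 D1) {ω | Y00 ω ≤ y}
      ∧ pr P (typeN D0 D1) {ω | Y00 ω ≤ y}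
        ≤ min (min (pr P {ω | Z ω = 0} {ω | Y ω ≤ y ∧ D ω = 0} / pn)
                  (pr P {ω | Z ω = 1} {ω | Y ω ≤ y ∧ D ω = 0} / pn)) 1)
  ∧ (0 < pa → 0 < pn → 0 < pc → ∀ y : ℝ,
      pr P (typeC D0 D1) {ω | Y11 ω ≤ y}
        = (pr P {ω | Z ω = 1} {ω | Y ω ≤ y ∧ D ω = 1}
            - pa * pr P (typeA D0 D1) {ω | Y11 ω ≤ y}) / pc
      ∧ pr P (typeC D0 D1) {ω | Y00 ω ≤ y}
        = (pr P {ω | Z ω = 0} {ω | Y ω ≤ y ∧ D ω = 0}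
            - pn * pr P (typeN D0 D1) {ω | Y00 ω ≤ y}) / pc)
  ∧ (0 < pa → 0 < pn → 0 < pdf → ∀ y : ℝ,
      pr P (typeDF D0 D1) {ω | Y11 ω ≤ y}
        = (pr P {ω | Z ω = 0} {ω | Y ω ≤ y ∧ D ω = 1}
            - pa * pr P (typeA D0 D1) {ω | Y11 ω ≤ y}) / pdf
      ∧ pr P (typeDF D0 D1) {ω | Y00 ω ≤ y}
        = (pr P {ω | Z ω = 1} {ω | Y ω ≤ y ∧ D ω = 0}
            - pn * pr P (typeN D0 D1) {ω | Y00 ω ≤ y}) / pdf) := by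
  obtain ⟨arm11, arm10, arm01, arm00⟩ := isInstrumentArm_of_randomAssignment hZm hZpos.ne'
    (measure_fiber_ne_zero_of_forall_or hZb hZlt) hDdef hYdef RA
  have hIic (y : ℝ) := distribution_bounds_ra_er_general hD0m hD1m hD0b hD1b arm11 arm10 arm01 arm00
    ER1 ER0 (measurableSet_Iic : MeasurableSet (Set.Iic y)) pa pn pc pdf hpa hpn hpc hpdf
  choose boundsA boundsN complier1 complier0 defier1 defier0 using hIic
  exact ⟨fun ha y => boundsA y ha, fun hn y => boundsN y hn,
    fun ha hn hc y => ⟨complier1 y ha hc, complier0 y hn hc⟩,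
    fun ha hn hdf y => ⟨defier1 y ha hdf, defier0 y hn hdf⟩⟩
end

section
/- Assume RA and ER, Y₁ and Y₀ integrable, p_a > 0, p_n > 0, P(D=1 | Z=1) − p_a > 0, P(D=1 | Z=0) − p_a > 0, P(D=0 | Z=0) − p_n > 0, and P(D=0 | Z=1) − p_n > 0. Then: E[Y₁ | T=c] = (E[Y·D | Z=1] − p_a·E[Y₁ | T=a]) / (P(D=1 | Z=1) − p_a); E[Y₁ | T=df] = (E[Y·D | Z=0] − p_a·E[Y₁ | T=a]) / (P(D=1 | Z=0) − p_a); E[Y₀ | T=c] = (E[Y·(1−D) | Z=0] − p_n·E[Y₀ | T=n]) / (P(D=0 | Z=0) − p_n); and E[Y₀ | T=df] = (E[Y·(1−D) | Z=1] − p_n·E[Y₀ | T=n]) / (P(D=0 | Z=1) − p_n). Moreover P(D=1 | Z=1) − p_a = p_c and P(D=1 | Z=0) − p_a = p_df, so that E[Y₁ − Y₀ | T=c] = E[Y₁ | T=c] − E[Y₀ | T=c] and E[Y₁ − Y₀ | T=df] = E[Y₁ | T=df] − E[Y₀ | T=df]. -/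
open MeasureTheory ProbabilityTheory

/-!
Fix an arm `{Z = z}` of the instrument and let `V` be the treatment a unit takes on it. By random
assignment, conditioning on the arm does not change the law of `(Y₁, V)`, so that
`E[Y D | Z = z] = E[Y₁; V = 1]` and `P(D = 1 | Z = z) = P(V = 1)`. The event `{V = 1}` is the
disjoint union of the always-takers and of the units that take the treatment on this arm only;
removing the contribution of the always-takers leaves the mean of `Y₁` over the latter. These are
the compliers for `z = 1` and the defiers for `z = 0`. Exchanging the names "treated" and
"untreated" gives the formulas for `Y₀`.
-/

section Conditioning

variable {Ω β : Type*} [MeasurableSpace Ω] [MeasurableSpace β] {P : Measure Ω}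
  {s t : Set Ω} {f g : Ω → ℝ}

theorem ae_cond_of_ae_imp (ht : MeasurableSet t) {p : Ω → Prop}
    (h : ∀ᵐ ω ∂P, ω ∈ t → p ω) : ∀ᵐ ω ∂P[|t], p ω :=
  Measure.ae_smul_measure ((ae_restrict_iff' ht).2 h) _

theorem integrable_cond (hf : Integrable f P) (t : Set Ω) : Integrable f (P[|t]) := by
  by_cases ht : P t = 0
  · simp [cond_eq_zero_of_meas_eq_zero ht]
  · exact hf.restrict.smul_measure (ENNReal.inv_ne_top.2 ht)

theorem ce_sub (hf : Integrable f P) (hg : Integrable g P) :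
    ce P t (fun ω => f ω - g ω) = ce P t f - ce P t g :=
  integral_sub (integrable_cond hf t) (integrable_cond hg t)

theorem ce_congr_ae (ht : MeasurableSet t) (h : ∀ᵐ ω ∂P, ω ∈ t → f ω = g ω) :
    ce P t f = ce P t g :=
  integral_congr_ae (ae_cond_of_ae_imp ht h)

theorem pr_congr_ae {s' : Set Ω} (ht : MeasurableSet t)
    (h : ∀ᵐ ω ∂P, ω ∈ t → (ω ∈ s ↔ ω ∈ s')) : pr P t s = pr P t s' :=
  congrArg ENNReal.toReal
    (measure_congr (Filter.eventuallyEq_set.2 (ae_cond_of_ae_imp ht h)))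

theorem ce_eq_inv_mul_setIntegral (P : Measure Ω) (t : Set Ω) (f : Ω → ℝ) :
    ce P t f = (P.real t)⁻¹ * ∫ ω in t, f ω ∂P := by
  rw [ce, ProbabilityTheory.cond, integral_smul_measure, ENNReal.toReal_inv, smul_eq_mul,
    measureReal_def]

theorem measureReal_mul_ce [IsFiniteMeasure P] (t : Set Ω) (f : Ω → ℝ) :
    P.real t * ce P t f = ∫ ω in t, f ω ∂P := by
  rw [ce_eq_inv_mul_setIntegral]
  by_cases ht : P t = 0
  · simp [Measure.restrict_eq_zero.2 ht]
  · exact mul_inv_cancel_left₀ ((measureReal_ne_zero_iff).2 ht) _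

theorem setIntegral_union_eq_add_ce [IsFiniteMeasure P] (hst : Disjoint s t)
    (ht : MeasurableSet t) (hf : Integrable f P) :
    ∫ ω in s ∪ t, f ω ∂P = P.real s * ce P s f + P.real t * ce P t f := by
  rw [setIntegral_union hst ht hf.integrableOn hf.integrableOn, measureReal_mul_ce,
    measureReal_mul_ce]

variable [IsFiniteMeasure P] {Z : Ω → β} {B : Set β}

theorem ce_preimage_eq_integral_of_indepFun (hZ : Measurable Z) (hB : MeasurableSet B)
    (hPB : P (Z ⁻¹' B) ≠ 0) (hf : AEMeasurable f P) (hfZ : IndepFun f Z P) :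
    ce P (Z ⁻¹' B) f = ∫ ω, f ω ∂P := by
  have h : ∫ ω in Z ⁻¹' B, f ω ∂P = P.real (Z ⁻¹' B) * ∫ ω, f ω ∂P :=
    Indep.setIntegral_eq_mul (f := id) hZ.comap_le ((IndepFun_iff_Indep _ _ _).1 hfZ.symm) hf
      ⟨B, hB, rfl⟩ measurable_id.aestronglyMeasurable
  rw [ce_eq_inv_mul_setIntegral, h, inv_mul_cancel_left₀ ((measureReal_ne_zero_iff).2 hPB)]

theorem pr_preimage_eq_measureReal_of_indepFun_s10 {γ : Type*} [MeasurableSpace γ] {V : Ω → γ}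
    {A : Set γ} (hZ : Measurable Z) (hB : MeasurableSet B) (hPB : P (Z ⁻¹' B) ≠ 0)
    (hA : MeasurableSet A) (hVZ : IndepFun V Z P) :
    pr P (Z ⁻¹' B) (V ⁻¹' A) = P.real (V ⁻¹' A) := by
  rw [pr, cond_apply (hZ hB), hVZ.symm.measure_inter_preimage_eq_mul _ _ hB hA,
    ENNReal.inv_mul_cancel_left hPB (measure_ne_top _ _), measureReal_def]

end Conditioning

theorem setOf_eq_zero_eq_compl {Ω : Type*} {V : Ω → ℝ} (hV : ∀ ω, V ω = 0 ∨ V ω = 1) :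
    {ω | V ω = 0} = {ω | V ω = 1}ᶜ := by
  ext ω
  rcases hV ω with h | h <;> simp [h]

section ComplianceTypes

variable {Ω : Type*} {U V : Ω → ℝ}

theorem typeA_swap (U V : Ω → ℝ) : typeA V U = typeA U V :=
  Set.inter_comm _ _

theorem typeN_swap (U V : Ω → ℝ) : typeN V U = typeN U V :=
  Set.inter_comm _ _

theorem typeC_swap (U V : Ω → ℝ) : typeC V U = typeDF U V :=
  Set.inter_comm _ _

theorem typeA_one_sub (U V : Ω → ℝ) :
    typeA (fun ω => 1 - U ω) (fun ω => 1 - V ω) = typeN U V := by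
  simp [typeA, typeN]

theorem typeC_one_sub (U V : Ω → ℝ) :
    typeC (fun ω => 1 - U ω) (fun ω => 1 - V ω) = typeDF U V := by
  simp [typeC, typeDF, sub_eq_zero, eq_comm (a := (1 : ℝ))]

theorem disjoint_typeA_typeC_s10 (U V : Ω → ℝ) : Disjoint (typeA U V) (typeC U V) :=
  Set.disjoint_left.2 fun _ ha hc => one_ne_zero (ha.1.symm.trans hc.1)

theorem typeA_union_typeC_s10 (hU : ∀ ω, U ω = 0 ∨ U ω = 1) :
    typeA U V ∪ typeC U V = {ω | V ω = 1} := by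
  ext ω
  rcases hU ω with h | h <;> simp [typeA, typeC, h]

theorem measurableSet_typeC_s10 [MeasurableSpace Ω] (hU : Measurable U) (hV : Measurable V) :
    MeasurableSet (typeC U V) :=
  (hU (measurableSet_singleton 0)).inter (hV (measurableSet_singleton 1))

end ComplianceTypes

/-- The units with `Z = z` form an arm of a randomized instrument satisfying the exclusion
restriction: there the observed treatment `D` is the binary potential treatment `V`, the observed
outcome `Y` is the potential outcome `Y₁` of the treated and `Y₀` of the untreated, and
`(Y₁, Y₀, V)` is independent of `Z`. The two arms of the theorem have `V = D₁` for `z = 1` and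
`V = D₀` for `z = 0`; treating one arm at a time makes the formulas for compliers and defiers
instances of the same statement. -/
structure InstrumentArm_s10 {Ω β : Type*} [MeasurableSpace Ω] [MeasurableSpace β] (P : Measure Ω)
    (Z : Ω → β) (z : β) (Y₁ Y₀ V D Y : Ω → ℝ) : Prop where
  measurable_instrument : Measurable Z
  measurable_potential : Measurable fun ω => (Y₁ ω, Y₀ ω, V ω)
  binary : ∀ ω, V ω = 0 ∨ V ω = 1
  measure_ne_zero : P {ω | Z ω = z} ≠ 0
  treatment_eq : ∀ᵐ ω ∂P, Z ω = z → D ω = V ω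
  outcome_eq : ∀ᵐ ω ∂P, Z ω = z → Y ω = Y₁ ω * V ω + Y₀ ω * (1 - V ω)
  indep : IndepFun (fun ω => (Y₁ ω, Y₀ ω, V ω)) Z P

namespace InstrumentArm_s10

variable {Ω β : Type*} [MeasurableSpace Ω] [MeasurableSpace β] {P : Measure Ω} {Z : Ω → β} {z : β}
  {Y₁ Y₀ U V D Y : Ω → ℝ}

theorem exchange_treatment (h : InstrumentArm_s10 P Z z Y₁ Y₀ V D Y) :
    InstrumentArm_s10 P Z z Y₀ Y₁ (fun ω => 1 - V ω) (fun ω => 1 - D ω) Y where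
  measurable_instrument := h.measurable_instrument
  measurable_potential :=
    (by fun_prop : Measurable fun x : ℝ × ℝ × ℝ => (x.2.1, x.1, 1 - x.2.2)).comp
      h.measurable_potential
  binary ω := by rcases h.binary ω with hω | hω <;> simp [hω]
  measure_ne_zero := h.measure_ne_zero
  treatment_eq := by filter_upwards [h.treatment_eq] with ω hD hz using by rw [hD hz]
  outcome_eq := by filter_upwards [h.outcome_eq] with ω hY hz using by rw [hY hz]; ring
  indep := h.indep.comp (φ := fun x => (x.2.1, x.1, 1 - x.2.2)) (by fun_prop) measurable_id

theorem measurable_treatment (h : InstrumentArm_s10 P Z z Y₁ Y₀ V D Y) : Measurable V :=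
  h.measurable_potential.snd.snd

variable [MeasurableSingletonClass β]

theorem measurableSet (h : InstrumentArm_s10 P Z z Y₁ Y₀ V D Y) : MeasurableSet {ω | Z ω = z} :=
  h.measurable_instrument (measurableSet_singleton z)

variable [IsFiniteMeasure P]

theorem pr_treated (h : InstrumentArm_s10 P Z z Y₁ Y₀ V D Y) :
    pr P {ω | Z ω = z} {ω | D ω = 1} = P.real {ω | V ω = 1} := by
  have hVZ : IndepFun V Z P :=
    h.indep.comp (φ := fun x : ℝ × ℝ × ℝ => x.2.2) (by fun_prop) measurable_id
  calc
    pr P {ω | Z ω = z} {ω | D ω = 1} = pr P {ω | Z ω = z} {ω | V ω = 1} :=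
      pr_congr_ae h.measurableSet <| by
        filter_upwards [h.treatment_eq] with ω hD hz using by simp [hD hz]
    _ = P.real {ω | V ω = 1} :=
      pr_preimage_eq_measureReal_of_indepFun_s10 (B := {z}) (A := {1}) h.measurable_instrument
        (measurableSet_singleton z) h.measure_ne_zero (measurableSet_singleton 1) hVZ

theorem ce_mul_treatment (h : InstrumentArm_s10 P Z z Y₁ Y₀ V D Y) :
    ce P {ω | Z ω = z} (fun ω => Y ω * D ω) = ∫ ω in {ω | V ω = 1}, Y₁ ω ∂P := by
  have hV : MeasurableSet {ω | V ω = 1} := h.measurable_treatment (measurableSet_singleton 1)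
  have hφ : Measurable ({x : ℝ × ℝ × ℝ | x.2.2 = 1}.indicator Prod.fst) :=
    measurable_fst.indicator (measurable_snd.snd (measurableSet_singleton 1))
  calc
    ce P {ω | Z ω = z} (fun ω => Y ω * D ω)
        = ce P {ω | Z ω = z} ({ω | V ω = 1}.indicator Y₁) :=
      ce_congr_ae h.measurableSet <| by
        filter_upwards [h.treatment_eq, h.outcome_eq] with ω hD hY hz
        rcases h.binary ω with hω | hω <;> simp [hD hz, hY hz, hω]
    _ = ∫ ω, {ω | V ω = 1}.indicator Y₁ ω ∂P :=
      ce_preimage_eq_integral_of_indepFun h.measurable_instrument (measurableSet_singleton z)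
        h.measure_ne_zero (hφ.comp h.measurable_potential).aemeasurable
        (h.indep.comp hφ measurable_id)
    _ = ∫ ω in {ω | V ω = 1}, Y₁ ω ∂P := integral_indicator hV

theorem pr_treated_sub_typeA (h : InstrumentArm_s10 P Z z Y₁ Y₀ V D Y) (hU : Measurable U)
    (hU01 : ∀ ω, U ω = 0 ∨ U ω = 1) :
    pr P {ω | Z ω = z} {ω | D ω = 1} - P.real (typeA U V) = P.real (typeC U V) := by
  rw [h.pr_treated, ← typeA_union_typeC_s10 hU01, measureReal_union (disjoint_typeA_typeC_s10 U V)
    (measurableSet_typeC_s10 hU h.measurable_treatment), add_sub_cancel_left]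

theorem ce_typeC (h : InstrumentArm_s10 P Z z Y₁ Y₀ V D Y) (hU : Measurable U)
    (hU01 : ∀ ω, U ω = 0 ∨ U ω = 1) (hY₁ : Integrable Y₁ P)
    (hpos : 0 < pr P {ω | Z ω = z} {ω | D ω = 1} - P.real (typeA U V)) :
    ce P (typeC U V) Y₁
      = (ce P {ω | Z ω = z} (fun ω => Y ω * D ω) - P.real (typeA U V) * ce P (typeA U V) Y₁)
        / (pr P {ω | Z ω = z} {ω | D ω = 1} - P.real (typeA U V)) := by
  rw [eq_div_iff hpos.ne', h.pr_treated_sub_typeA hU hU01, h.ce_mul_treatment,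
    ← typeA_union_typeC_s10 hU01, setIntegral_union_eq_add_ce (disjoint_typeA_typeC_s10 U V)
    (measurableSet_typeC_s10 hU h.measurable_treatment) hY₁, add_sub_cancel_left, mul_comm]

theorem ce_typeDF (h : InstrumentArm_s10 P Z z Y₁ Y₀ V D Y) (hU : Measurable U)
    (hU01 : ∀ ω, U ω = 0 ∨ U ω = 1) (hY₀ : Integrable Y₀ P)
    (hpos : 0 < pr P {ω | Z ω = z} {ω | D ω = 0} - P.real (typeN U V)) :
    ce P (typeDF U V) Y₀
      = (ce P {ω | Z ω = z} (fun ω => Y ω * (1 - D ω)) - P.real (typeN U V) * ce P (typeN U V) Y₀)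
        / (pr P {ω | Z ω = z} {ω | D ω = 0} - P.real (typeN U V)) := by
  have hU01' : ∀ ω, 1 - U ω = 0 ∨ 1 - U ω = 1 := fun ω => by
    rcases hU01 ω with hω | hω <;> simp [hω]
  have h_exchanged := h.exchange_treatment.ce_typeC (hU.const_sub 1) hU01' hY₀
  simp only [typeA_one_sub, typeC_one_sub, sub_eq_self] at h_exchanged
  exact h_exchanged hpos

end InstrumentArm_s10

theorem mean_potential_outcomes_ra_er
    {Ω : Type*} [MeasurableSpace Ω] (P : Measure Ω) [IsProbabilityMeasure P]
    (Y11 Y10 Y01 Y00 D0 D1 Z D Y : Ω → ℝ)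
    (hY11m : Measurable Y11) (hY10m : Measurable Y10)
    (hY01m : Measurable Y01) (hY00m : Measurable Y00)
    (hD0m : Measurable D0) (hD1m : Measurable D1) (hZm : Measurable Z)
    (hD0b : ∀ ω, D0 ω = 0 ∨ D0 ω = 1) (hD1b : ∀ ω, D1 ω = 0 ∨ D1 ω = 1)
    (hZb : ∀ ω, Z ω = 0 ∨ Z ω = 1)
    (hZpos : 0 < P {ω | Z ω = 1}) (hZlt : P {ω | Z ω = 1} < 1)
    (hDdef : ∀ ω, D ω = D1 ω * Z ω + D0 ω * (1 - Z ω))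
    (hYdef : ∀ ω, Y ω = (Y11 ω * Z ω + Y10 ω * (1 - Z ω)) * D ω
        + (Y01 ω * Z ω + Y00 ω * (1 - Z ω)) * (1 - D ω))
    (RA : IndepFun (fun ω => (Y11 ω, Y10 ω, Y01 ω, Y00 ω, D0 ω, D1 ω)) Z P)
    (ER1 : ∀ᵐ ω ∂P, Y11 ω = Y10 ω) (ER0 : ∀ᵐ ω ∂P, Y01 ω = Y00 ω)
    (hY1int : Integrable Y11 P) (hY0int : Integrable Y00 P)
    (pa pn pc pdf : ℝ)
    (hpa : pa = (P (typeA D0 D1)).toReal) (hpn : pn = (P (typeN D0 D1)).toReal)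
    (hpc : pc = (P (typeC D0 D1)).toReal) (hpdf : pdf = (P (typeDF D0 D1)).toReal)
    (hpa0 : 0 < pa) (hpn0 : 0 < pn)
    (h1 : 0 < pr P {ω | Z ω = 1} {ω | D ω = 1} - pa)
    (h2 : 0 < pr P {ω | Z ω = 0} {ω | D ω = 1} - pa)
    (h3 : 0 < pr P {ω | Z ω = 0} {ω | D ω = 0} - pn)
    (h4 : 0 < pr P {ω | Z ω = 1} {ω | D ω = 0} - pn) :
    ce P (typeC D0 D1) Y11
      = (ce P {ω | Z ω = 1} (fun ω => Y ω * D ω) - pa * ce P (typeA D0 D1) Y11)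
        / (pr P {ω | Z ω = 1} {ω | D ω = 1} - pa)
  ∧ ce P (typeDF D0 D1) Y11
      = (ce P {ω | Z ω = 0} (fun ω => Y ω * D ω) - pa * ce P (typeA D0 D1) Y11)
        / (pr P {ω | Z ω = 0} {ω | D ω = 1} - pa)
  ∧ ce P (typeC D0 D1) Y00
      = (ce P {ω | Z ω = 0} (fun ω => Y ω * (1 - D ω)) - pn * ce P (typeN D0 D1) Y00)
        / (pr P {ω | Z ω = 0} {ω | D ω = 0} - pn)
  ∧ ce P (typeDF D0 D1) Y00
      = (ce P {ω | Z ω = 1} (fun ω => Y ω * (1 - D ω)) - pn * ce P (typeN D0 D1) Y00)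
        / (pr P {ω | Z ω = 1} {ω | D ω = 0} - pn)
  ∧ pr P {ω | Z ω = 1} {ω | D ω = 1} - pa = pc
  ∧ pr P {ω | Z ω = 0} {ω | D ω = 1} - pa = pdf
  ∧ ce P (typeC D0 D1) (fun ω => Y11 ω - Y00 ω)
      = ce P (typeC D0 D1) Y11 - ce P (typeC D0 D1) Y00
  ∧ ce P (typeDF D0 D1) (fun ω => Y11 ω - Y00 ω)
      = ce P (typeDF D0 D1) Y11 - ce P (typeDF D0 D1) Y00 := by
  have hZ0 : P {ω | Z ω = 0} ≠ 0 := by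
    rw [setOf_eq_zero_eq_compl hZb]
    exact (prob_compl_eq_zero_iff (hZm (measurableSet_singleton 1))).not.2 hZlt.ne
  have arm₁ : InstrumentArm_s10 P Z 1 Y11 Y00 D1 D Y :=
    ⟨hZm, by fun_prop, hD1b, hZpos.ne', .of_forall fun ω hz => by simp [hDdef, hz],
      by filter_upwards [ER0] with ω hY hz using by simp [hYdef, hDdef, hz, hY],
      RA.comp (φ := fun x => (x.1, x.2.2.2.1, x.2.2.2.2.2)) (by fun_prop) measurable_id⟩
  have arm₀ : InstrumentArm_s10 P Z 0 Y11 Y00 D0 D Y :=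
    ⟨hZm, by fun_prop, hD0b, hZ0, .of_forall fun ω hz => by simp [hDdef, hz],
      by filter_upwards [ER1] with ω hY hz using by simp [hYdef, hDdef, hz, hY],
      RA.comp (φ := fun x => (x.1, x.2.2.2.1, x.2.2.2.2.1)) (by fun_prop) measurable_id⟩
  subst hpa hpn hpc hpdf
  simp only [← measureReal_def] at h1 h2 h3 h4 ⊢
  rw [← typeA_swap] at h2
  rw [← typeN_swap] at h3
  refine ⟨arm₁.ce_typeC hD0m hD0b hY1int h1, ?_, ?_, arm₁.ce_typeDF hD0m hD0b hY0int h4,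
    arm₁.pr_treated_sub_typeA hD0m hD0b, ?_, ce_sub hY1int hY0int, ce_sub hY1int hY0int⟩
  · rw [← typeA_swap, ← typeC_swap]
    exact arm₀.ce_typeC hD1m hD1b hY1int h2
  · rw [← typeN_swap, typeC_swap]
    exact arm₀.ce_typeDF hD1m hD1b hY0int h3
  · rw [← typeA_swap, ← typeC_swap]
    exact arm₀.pr_treated_sub_typeA hD1m hD1b
end
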